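/- Let Γ : [0,1] → ℝ³ be a minimizing geodesic joining two points P and Q of ℝ³, and let [a,b] ⊂ [0,1] be an interval such that γ := Π(Γ) avoids p₋ and p₊ for all t ∈ (a,b). Then Γ restricted to (a,b) is smooth and admissible, and γ satisfies on (a,b) the Euler–Lagrange system −(F(γ) γ'/|γ'|)' + |γ'| ∇F(γ) = −λ (γ')^⊥ for some constant λ, where (x,y)^⊥ := (−y,x). Moreover, if Γ contains no vertical line segment over p₋ or p₊, then this system holds with the same constant λ on every such arc of Γ. -/

import Mathlib

open MeasureTheory Set Filter Topology
open scoped ENNReal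

noncomputable section

/-- The Euclidean norm of a vector in `ℝ × ℝ`. -/
def enorm2 (v : ℝ × ℝ) : ℝ := Real.sqrt (v.1 ^ 2 + v.2 ^ 2)

/-- The degenerate length `E(γ) = ∫ₐᵇ F(γ(t)) |γ'(t)| dt` of a planar curve. -/
def degLen (F : ℝ × ℝ → ℝ) (a b : ℝ) (γ : ℝ → ℝ × ℝ) : ℝ :=
  ∫ t in a..b, F (γ t) * enorm2 (deriv γ t)

/-- The signed area `𝒜(γ) = ∫ₐᵇ γ¹(t) (γ²)'(t) dt` of a planar curve. -/
def sArea (a b : ℝ) (γ : ℝ → ℝ × ℝ) : ℝ :=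
  ∫ t in a..b, (γ t).1 * deriv (fun s => (γ s).2) t

/-- A locally Lipschitz curve on `[a,b]` joining `p` to `q`. -/
def IsCurve (a b : ℝ) (γ : ℝ → ℝ × ℝ) (p q : ℝ × ℝ) : Prop :=
  a ≤ b ∧ LocallyLipschitz γ ∧ γ a = p ∧ γ b = q

/-- The standing hypotheses on the potential `W`: smooth, nonnegative, vanishing exactly at the
two distinct wells `pm` and `pp`, with positive definite Hessians there, and bounded away from
zero near infinity (`liminf_{|p|→∞} W(p) > 0`). -/
structure TwoWell (W : ℝ × ℝ → ℝ) (pm pp : ℝ × ℝ) : Prop where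
  smooth : ContDiff ℝ (⊤ : ℕ∞) W
  nonneg : ∀ p, 0 ≤ W p
  wells_ne : pm ≠ pp
  zeroSet : ∀ p, W p = 0 ↔ p = pm ∨ p = pp
  hess_m : ∀ v : ℝ × ℝ, v ≠ 0 → 0 < iteratedFDeriv ℝ 2 W pm ![v, v]
  hess_p : ∀ v : ℝ × ℝ, v ≠ 0 → 0 < iteratedFDeriv ℝ 2 W pp ![v, v]
  coercive : ∃ c > 0, ∃ R : ℝ, ∀ p : ℝ × ℝ, R ≤ ‖p‖ → c ≤ W p

/-- The singular Carnot–Carathéodory distance on `ℝ³` induced by the conformal factor `F`: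
the infimum of degenerate lengths of locally Lipschitz planar curves joining the planar
projections of `P` and `Q` whose signed area equals the difference of third coordinates. -/
def dCC (F : ℝ × ℝ → ℝ) (P Q : ℝ × ℝ × ℝ) : ℝ :=
  sInf { x | ∃ a b γ, IsCurve a b γ (P.1, P.2.1) (Q.1, Q.2.1) ∧
      sArea a b γ = Q.2.2 - P.2.2 ∧ degLen F a b γ = x }

/-- The length of a curve in `ℝ³` with respect to the metric `dCC F`: the supremum over
finite partitions of the sums of distances of consecutive sample points. -/
def pathLen (F : ℝ × ℝ → ℝ) (a b : ℝ) (Γ : ℝ → ℝ × ℝ × ℝ) : ℝ :=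
  sSup { x | ∃ (n : ℕ) (t : Fin (n + 1) → ℝ), Monotone t ∧ t 0 = a ∧ t (Fin.last n) = b ∧
      x = ∑ i : Fin n, dCC F (Γ (t i.castSucc)) (Γ (t i.succ)) }

/-- A curve `Γ = (Γ¹,Γ²,Γ³) : ℝ → ℝ³` is admissible on `[a,b]` if
`(Γ³)'(t) = Γ¹(t) (Γ²)'(t)` for a.e. `t ∈ (a,b)`. -/
def Admissible (a b : ℝ) (Γ : ℝ → ℝ × ℝ × ℝ) : Prop :=
  ∀ᵐ t : ℝ ∂volume, t ∈ Set.Ioo a b →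
    deriv (fun s => (Γ s).2.2) t = (Γ t).1 * deriv (fun s => (Γ s).2.1) t

/-- The planar projection `Π(Γ) = (Γ¹,Γ²)` of a curve in `ℝ³`. -/
def projCurve (Γ : ℝ → ℝ × ℝ × ℝ) : ℝ → ℝ × ℝ := fun t => ((Γ t).1, (Γ t).2.1)

/-- `Γ : [0,1] → ℝ³` is a minimizing geodesic from `P` to `Q`: it joins `P` to `Q`, each of its
sub-arcs is length minimizing, and it is the uniform limit (in the metric `dCC F`) of admissible
locally Lipschitz curves joining `P` to `Q`, parametrized with constant degenerate speed, whose
degenerate lengths converge to `dCC F P Q`. -/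
def IsMinGeodesic (F : ℝ × ℝ → ℝ) (P Q : ℝ × ℝ × ℝ) (Γ : ℝ → ℝ × ℝ × ℝ) : Prop :=
  Γ 0 = P ∧ Γ 1 = Q ∧
  (∀ s t : ℝ, 0 ≤ s → s ≤ t → t ≤ 1 → pathLen F s t Γ = dCC F (Γ s) (Γ t)) ∧
  ∃ Γseq : ℕ → ℝ → ℝ × ℝ × ℝ,
    (∀ j, LocallyLipschitz (Γseq j) ∧ Admissible 0 1 (Γseq j) ∧
      Γseq j 0 = P ∧ Γseq j 1 = Q ∧
      (∀ᵐ t : ℝ ∂volume, t ∈ Set.Ioo (0:ℝ) 1 →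
        F (projCurve (Γseq j) t) * enorm2 (deriv (projCurve (Γseq j)) t)
          = degLen F 0 1 (projCurve (Γseq j)))) ∧
    Tendsto (fun j => degLen F 0 1 (projCurve (Γseq j))) atTop (𝓝 (dCC F P Q)) ∧
    (∀ ε > 0, ∃ N : ℕ, ∀ j ≥ N, ∀ t ∈ Set.Icc (0:ℝ) 1, dCC F (Γseq j t) (Γ t) < ε)

/-- The planar gradient of `F`, computed through the Fréchet derivative. -/
def grad2 (F : ℝ × ℝ → ℝ) (p : ℝ × ℝ) : ℝ × ℝ := (fderiv ℝ F p (1, 0), fderiv ℝ F p (0, 1))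

/-- The rotation `(x,y)^⊥ = (−y,x)`. -/
def perp (v : ℝ × ℝ) : ℝ × ℝ := (-v.2, v.1)

/-- The Euler–Lagrange system `−(F(γ) γ'/|γ'|)' + |γ'| ∇F(γ) = −λ (γ')^⊥` at time `t`. -/
def ELeq (F : ℝ × ℝ → ℝ) (lam : ℝ) (γ : ℝ → ℝ × ℝ) (t : ℝ) : Prop :=
  -(deriv (fun s => (F (γ s) / enorm2 (deriv γ s)) • deriv γ s) t)
      + enorm2 (deriv γ t) • grad2 F (γ t)
    = -(lam • perp (deriv γ t))

/-!
A minimizing geodesic has constant degenerate speed `l`, and away from the zeros of `F` it is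
locally a horizontal lift of its projection `γ`, which minimizes length among planar curves with
prescribed endpoints and area; at constant speed it therefore also minimizes the energy
`∫ F(γ)²|γ'|²`, which involves only the smooth function `F²`.

A perturbation of one arc which changes its area by `δ` can be compensated by a perturbation of any
other arc which changes its area by `-δ`: the part of the geodesic between the two arcs is merely
translated vertically, and `dCC` is invariant under vertical translations. Hence the first variation
of the energy is `μ` times the first variation of the area on every arc, with one multiplier `μ`
for the whole geodesic, even if it passes through zeros of `F` between the arcs. The lemma of
du Bois-Reymond turns this into an equation for the derivative of the momentum `2F(γ)²γ'`, from
which smoothness follows by bootstrapping, and dividing by `2l` gives the system with `λ = μ/(2l)`.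
-/

section LocallyLipschitz

variable {E : Type*} [NormedAddCommGroup E] [NormedSpace ℝ E]

lemma exists_lipschitzOnWith_Icc_of_locallyLipschitz {X : Type*} [PseudoMetricSpace X] {f : ℝ → X}
    (hf : LocallyLipschitz f) (a b : ℝ) : ∃ K, LipschitzOnWith K f (Icc a b) :=
  (hf.locallyLipschitzOn (s := Icc a b)).exists_lipschitzOnWith_of_compact isCompact_Icc

lemma ae_differentiableAt_of_locallyLipschitz [FiniteDimensional ℝ E] {f : ℝ → E}
    (hf : LocallyLipschitz f) : ∀ᵐ t, DifferentiableAt ℝ f t := by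
  refine LocallyBoundedVariationOn.ae_differentiableAt fun a b _ _ => ?_
  obtain ⟨K, hK⟩ := exists_lipschitzOnWith_Icc_of_locallyLipschitz hf a b
  rw [univ_inter]
  rcases le_total a b with hab | hba
  · simpa using hK.locallyBoundedVariationOn a b (left_mem_Icc.2 hab) (right_mem_Icc.2 hab)
  · simp [BoundedVariationOn, eVariationOn.subsingleton f (subsingleton_Icc_of_ge hba)]

lemma absolutelyContinuousOnInterval_of_locallyLipschitz {X : Type*} [PseudoMetricSpace X]
    {f : ℝ → X} (hf : LocallyLipschitz f) (a b : ℝ) : AbsolutelyContinuousOnInterval f a b := by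
  obtain ⟨K, hK⟩ := exists_lipschitzOnWith_Icc_of_locallyLipschitz hf (min a b) (max a b)
  exact LipschitzOnWith.absolutelyContinuousOnInterval hK

lemma integral_deriv_eq_sub_of_locallyLipschitz {f : ℝ → ℝ} (hf : LocallyLipschitz f) (a b : ℝ) :
    ∫ t in a..b, deriv f t = f b - f a :=
  (absolutelyContinuousOnInterval_of_locallyLipschitz hf a b).integral_deriv_eq_sub

lemma locallyLipschitz_const_smul {f : ℝ → E} (hf : LocallyLipschitz f) (c : ℝ) :
    LocallyLipschitz fun t => c • f t :=
  (lipschitzWith_smul c).locallyLipschitz.comp hf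

end LocallyLipschitz

section LocallyBoundedMeasurable

/-- A measurable function of a real variable that is bounded on compact sets. Derivatives of
locally Lipschitz curves are of this kind, and so is every integrand built from them by continuous
operations. -/
structure LocallyBoundedMeasurable {X : Type*} [PseudoMetricSpace X] [MeasurableSpace X]
    (f : ℝ → X) : Prop where
  measurable : Measurable f
  isBounded_image : ∀ K : Set ℝ, IsCompact K → Bornology.IsBounded (f '' K)

namespace LocallyBoundedMeasurable

variable {X Y : Type*} [PseudoMetricSpace X] [MeasurableSpace X]
  [PseudoMetricSpace Y] [MeasurableSpace Y]
  {E : Type*} [NormedAddCommGroup E] [MeasurableSpace E] [BorelSpace E]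

lemma of_continuous [BorelSpace X] {f : ℝ → X} (hf : Continuous f) : LocallyBoundedMeasurable f :=
  ⟨hf.measurable, fun _ hK => (hK.image hf).isBounded⟩

lemma prodMk {f : ℝ → X} {g : ℝ → Y} (hf : LocallyBoundedMeasurable f)
    (hg : LocallyBoundedMeasurable g) : LocallyBoundedMeasurable fun t => (f t, g t) where
  measurable := hf.measurable.prodMk hg.measurable
  isBounded_image K hK :=
    ((hf.isBounded_image K hK).prod (hg.isBounded_image K hK)).subset <| by
      rintro _ ⟨t, ht, rfl⟩
      exact ⟨mem_image_of_mem f ht, mem_image_of_mem g ht⟩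

lemma continuous_comp [ProperSpace X] [OpensMeasurableSpace X] [BorelSpace Y] {g : X → Y}
    {f : ℝ → X} (hg : Continuous g) (hf : LocallyBoundedMeasurable f) :
    LocallyBoundedMeasurable fun t => g (f t) where
  measurable := hg.measurable.comp hf.measurable
  isBounded_image K hK := by
    have hcompact : IsCompact (closure (f '' K)) := (hf.isBounded_image K hK).isCompact_closure
    refine (hcompact.image hg).isBounded.subset ?_
    rintro _ ⟨t, ht, rfl⟩
    exact mem_image_of_mem g (subset_closure (mem_image_of_mem f ht))

lemma deriv_of_locallyLipschitz [NormedSpace ℝ E] [CompleteSpace E] {f : ℝ → E}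
    (hf : LocallyLipschitz f) : LocallyBoundedMeasurable (deriv f) where
  measurable := measurable_deriv f
  isBounded_image K hK := by
    obtain ⟨r, hr⟩ := hK.isBounded.subset_closedBall 0
    obtain ⟨C, hC⟩ := exists_lipschitzOnWith_Icc_of_locallyLipschitz hf (-r - 1) (r + 1)
    refine isBounded_iff_forall_norm_le.2 ⟨C, ?_⟩
    rintro _ ⟨t, ht, rfl⟩
    have ht' := Real.closedBall_eq_Icc ▸ hr ht
    exact norm_deriv_le_of_lipschitzOn
      (Icc_mem_nhds (by linarith [ht'.1]) (by linarith [ht'.2])) hC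

lemma exists_norm_le {G : Type*} [SeminormedAddCommGroup G] [MeasurableSpace G] {f : ℝ → G}
    (hf : LocallyBoundedMeasurable f) (a b : ℝ) :
    ∃ C, ∀ t ∈ Icc a b, ‖f t‖ ≤ C := by
  obtain ⟨C, hC⟩ := isBounded_iff_forall_norm_le.1 (hf.isBounded_image _ isCompact_Icc)
  exact ⟨C, fun t ht => hC _ (mem_image_of_mem f ht)⟩

variable [SecondCountableTopology E]

lemma intervalIntegrable {f : ℝ → E} (hf : LocallyBoundedMeasurable f) (a b : ℝ) :
    IntervalIntegrable f volume a b := by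
  obtain ⟨C, hC⟩ := hf.exists_norm_le (min a b) (max a b)
  rw [intervalIntegrable_iff]
  refine Measure.integrableOn_of_bounded (M := C) (by simp)
    hf.measurable.aestronglyMeasurable ?_
  rw [ae_restrict_iff' measurableSet_uIoc]
  exact Eventually.of_forall fun t ht => hC t (uIoc_subset_uIcc ht)

lemma locallyLipschitz_integral [NormedSpace ℝ E] {f : ℝ → E}
    (hf : LocallyBoundedMeasurable f) (a : ℝ) : LocallyLipschitz fun t => ∫ u in a..t, f u := by
  intro t
  obtain ⟨C, hC⟩ := hf.exists_norm_le (t - 1) (t + 1)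
  refine ⟨C.toNNReal, Icc (t - 1) (t + 1), Icc_mem_nhds (by linarith) (by linarith),
    LipschitzOnWith.of_dist_le_mul fun x hx y hy => ?_⟩
  rw [dist_eq_norm, intervalIntegral.integral_interval_sub_left (hf.intervalIntegrable a x)
    (hf.intervalIntegrable a y), Real.dist_eq]
  refine (intervalIntegral.norm_integral_le_of_norm_le_const fun u hu => hC u ?_).trans
    (mul_le_mul_of_nonneg_right (Real.le_coe_toNNReal C) (abs_nonneg _))
  exact uIcc_subset_Icc hy hx (uIoc_subset_uIcc hu)

end LocallyBoundedMeasurable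

end LocallyBoundedMeasurable

section Interval

lemma intervalIntegral_congr_ae_Ioo {E : Type*} [NormedAddCommGroup E] [NormedSpace ℝ E]
    {a b : ℝ} (hab : a ≤ b) {f g : ℝ → E} (h : ∀ᵐ t : ℝ, t ∈ Ioo a b → f t = g t) :
    ∫ t in a..b, f t = ∫ t in a..b, g t := by
  refine intervalIntegral.integral_congr_ae ?_
  filter_upwards [h, Measure.ae_ne volume b] with t ht htb hmem
  rw [uIoc_of_le hab] at hmem
  exact ht ⟨hmem.1, lt_of_le_of_ne hmem.2 htb⟩

lemma intervalIntegral_mono_ae_Ioo {a b : ℝ} (hab : a ≤ b) {f g : ℝ → ℝ}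
    (hf : IntervalIntegrable f volume a b) (hg : IntervalIntegrable g volume a b)
    (h : ∀ᵐ t : ℝ, t ∈ Ioo a b → f t ≤ g t) : ∫ t in a..b, f t ≤ ∫ t in a..b, g t := by
  refine intervalIntegral.integral_mono_ae_restrict hab hf hg ?_
  filter_upwards [ae_restrict_of_ae h, ae_restrict_mem measurableSet_Icc,
    ae_restrict_of_ae (Measure.ae_ne volume a), ae_restrict_of_ae (Measure.ae_ne volume b)]
    with t ht hmem hta htb
  exact ht ⟨lt_of_le_of_ne hmem.1 hta.symm, lt_of_le_of_ne hmem.2 htb⟩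

lemma exists_lipschitzWith_eqOn_Icc {X : Type*} [PseudoMetricSpace X] {a b : ℝ} (hab : a ≤ b)
    {K : NNReal} {f : ℝ → X} (hf : LipschitzOnWith K f (Icc a b)) :
    ∃ g : ℝ → X, LipschitzWith K g ∧ EqOn g f (Icc a b) := by
  refine ⟨IccExtend hab ((Icc a b).domRestrict f), ?_, fun t ht => IccExtend_of_mem hab _ ht⟩
  simpa [IccExtend] using (lipschitzOnWith_iff_restrict.1 hf).comp (LipschitzWith.projIcc hab)

end Interval

section EuclideanNorm

lemma enorm2_nonneg (v : ℝ × ℝ) : 0 ≤ enorm2 v := Real.sqrt_nonneg _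

lemma enorm2_sq (v : ℝ × ℝ) : enorm2 v ^ 2 = v.1 ^ 2 + v.2 ^ 2 :=
  Real.sq_sqrt (by positivity)

@[fun_prop]
lemma continuous_enorm2 : Continuous enorm2 := by
  unfold enorm2
  fun_prop

lemma abs_fst_le_enorm2 (v : ℝ × ℝ) : |v.1| ≤ enorm2 v :=
  Real.abs_le_sqrt (by nlinarith [sq_nonneg v.2])

lemma abs_snd_le_enorm2 (v : ℝ × ℝ) : |v.2| ≤ enorm2 v :=
  Real.abs_le_sqrt (by nlinarith [sq_nonneg v.1])

lemma norm_le_enorm2 (v : ℝ × ℝ) : ‖v‖ ≤ enorm2 v :=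
  max_le (abs_fst_le_enorm2 v) (abs_snd_le_enorm2 v)

lemma enorm2_smul (c : ℝ) (v : ℝ × ℝ) : enorm2 (c • v) = |c| * enorm2 v := by
  rw [enorm2, enorm2, ← Real.sqrt_sq_eq_abs, ← Real.sqrt_mul (sq_nonneg c)]
  congr 1
  simp only [Prod.smul_fst, Prod.smul_snd, smul_eq_mul]
  ring

lemma enorm2_zero : enorm2 0 = 0 := by simp [enorm2]

lemma enorm2_neg (v : ℝ × ℝ) : enorm2 (-v) = enorm2 v := by simp [enorm2]

lemma fst_mul_add_snd_mul_le_enorm2_mul (v w : ℝ × ℝ) :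
    v.1 * w.1 + v.2 * w.2 ≤ enorm2 v * enorm2 w := by
  refine le_of_abs_le <| abs_le_of_sq_le_sq ?_ (mul_nonneg (enorm2_nonneg v) (enorm2_nonneg w))
  rw [mul_pow, enorm2_sq, enorm2_sq]
  nlinarith [sq_nonneg (v.1 * w.2 - v.2 * w.1)]

end EuclideanNorm

section Coordinates

lemma locallyLipschitz_fst {X Y : Type*} [PseudoMetricSpace X] [PseudoMetricSpace Y]
    {f : ℝ → X × Y} (hf : LocallyLipschitz f) : LocallyLipschitz fun t => (f t).1 :=
  LipschitzWith.prod_fst.locallyLipschitz.comp hf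

lemma locallyLipschitz_snd {X Y : Type*} [PseudoMetricSpace X] [PseudoMetricSpace Y]
    {f : ℝ → X × Y} (hf : LocallyLipschitz f) : LocallyLipschitz fun t => (f t).2 :=
  LipschitzWith.prod_snd.locallyLipschitz.comp hf

lemma deriv_fst {E G : Type*} [NormedAddCommGroup E] [NormedSpace ℝ E] [NormedAddCommGroup G]
    [NormedSpace ℝ G] {f : ℝ → E × G} {t : ℝ} (h : DifferentiableAt ℝ f t) :
    deriv (fun s => (f s).1) t = (deriv f t).1 :=
  ((ContinuousLinearMap.fst ℝ E G).hasFDerivAt.comp_hasDerivAt t h.hasDerivAt).deriv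

lemma deriv_snd {E G : Type*} [NormedAddCommGroup E] [NormedSpace ℝ E] [NormedAddCommGroup G]
    [NormedSpace ℝ G] {f : ℝ → E × G} {t : ℝ} (h : DifferentiableAt ℝ f t) :
    deriv (fun s => (f s).2) t = (deriv f t).2 :=
  ((ContinuousLinearMap.snd ℝ E G).hasFDerivAt.comp_hasDerivAt t h.hasDerivAt).deriv

end Coordinates

section LengthAndArea

variable {F : ℝ × ℝ → ℝ} {γ δ : ℝ → ℝ × ℝ} {a b c : ℝ}

lemma integral_deriv_fst (hγ : LocallyLipschitz γ) (a b : ℝ) :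
    ∫ t in a..b, (deriv γ t).1 = (γ b).1 - (γ a).1 := by
  rw [← integral_deriv_eq_sub_of_locallyLipschitz (locallyLipschitz_fst hγ)]
  refine intervalIntegral.integral_congr_ae ?_
  filter_upwards [ae_differentiableAt_of_locallyLipschitz hγ] with t ht _
  exact (deriv_fst ht).symm

lemma integral_deriv_snd (hγ : LocallyLipschitz γ) (a b : ℝ) :
    ∫ t in a..b, (deriv γ t).2 = (γ b).2 - (γ a).2 := by
  rw [← integral_deriv_eq_sub_of_locallyLipschitz (locallyLipschitz_snd hγ)]
  refine intervalIntegral.integral_congr_ae ?_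
  filter_upwards [ae_differentiableAt_of_locallyLipschitz hγ] with t ht _
  exact (deriv_snd ht).symm

lemma locallyBoundedMeasurable_jet (hγ : LocallyLipschitz γ) :
    LocallyBoundedMeasurable fun t => (γ t, deriv γ t) :=
  (LocallyBoundedMeasurable.of_continuous hγ.continuous).prodMk
    (LocallyBoundedMeasurable.deriv_of_locallyLipschitz hγ)

lemma intervalIntegrable_comp_jet {g : (ℝ × ℝ) × ℝ × ℝ → ℝ} (hg : Continuous g)
    (hγ : LocallyLipschitz γ) (a b : ℝ) :
    IntervalIntegrable (fun t => g (γ t, deriv γ t)) volume a b :=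
  ((locallyBoundedMeasurable_jet hγ).continuous_comp hg).intervalIntegrable a b

lemma intervalIntegrable_degLen (hF : Continuous F) (hγ : LocallyLipschitz γ) (a b : ℝ) :
    IntervalIntegrable (fun t => F (γ t) * enorm2 (deriv γ t)) volume a b :=
  intervalIntegrable_comp_jet (g := fun z => F z.1 * enorm2 z.2) (by fun_prop) hγ a b

lemma intervalIntegrable_sArea (hγ : LocallyLipschitz γ) (a b : ℝ) :
    IntervalIntegrable (fun t => (γ t).1 * (deriv γ t).2) volume a b :=
  intervalIntegrable_comp_jet (g := fun z => z.1.1 * z.2.2) (by fun_prop) hγ a b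

lemma sArea_eq_integral (hγ : LocallyLipschitz γ) (a b : ℝ) :
    sArea a b γ = ∫ t in a..b, (γ t).1 * (deriv γ t).2 := by
  refine intervalIntegral.integral_congr_ae ?_
  filter_upwards [ae_differentiableAt_of_locallyLipschitz hγ] with t ht _
  rw [deriv_snd ht]

lemma degLen_nonneg (hF : ∀ p, 0 ≤ F p) (hab : a ≤ b) : 0 ≤ degLen F a b γ :=
  intervalIntegral.integral_nonneg hab fun _ _ => mul_nonneg (hF _) (enorm2_nonneg _)

lemma degLen_add_adjacent (hF : Continuous F) (hγ : LocallyLipschitz γ) (a b c : ℝ) :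
    degLen F a b γ + degLen F b c γ = degLen F a c γ :=
  intervalIntegral.integral_add_adjacent_intervals (intervalIntegrable_degLen hF hγ a b)
    (intervalIntegrable_degLen hF hγ b c)

lemma sArea_add_adjacent (hγ : LocallyLipschitz γ) (a b c : ℝ) :
    sArea a b γ + sArea b c γ = sArea a c γ := by
  simp only [sArea_eq_integral hγ]
  exact intervalIntegral.integral_add_adjacent_intervals (intervalIntegrable_sArea hγ a b)
    (intervalIntegrable_sArea hγ b c)

lemma deriv_eq_of_eqOn_Ioo {E : Type*} [NormedAddCommGroup E] [NormedSpace ℝ E] {f g : ℝ → E}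
    (h : EqOn f g (Ioo a b)) {t : ℝ} (ht : t ∈ Ioo a b) : deriv f t = deriv g t :=
  (h.eventuallyEq_of_mem (Ioo_mem_nhds ht.1 ht.2)).deriv_eq

lemma degLen_congr (hab : a ≤ b) (h : EqOn γ δ (Ioo a b)) : degLen F a b γ = degLen F a b δ :=
  intervalIntegral_congr_ae_Ioo hab <| Eventually.of_forall fun t ht => by
    rw [h ht, deriv_eq_of_eqOn_Ioo h ht]

lemma sArea_congr (hab : a ≤ b) (h : EqOn γ δ (Ioo a b)) : sArea a b γ = sArea a b δ :=
  intervalIntegral_congr_ae_Ioo hab <| Eventually.of_forall fun t ht => by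
    rw [h ht, deriv_eq_of_eqOn_Ioo (fun s hs => congrArg Prod.snd (h hs)) ht]

lemma mul_degLen_one_le_degLen (hF : Continuous F) (hγ : LocallyLipschitz γ) (hab : a ≤ b)
    (hc : ∀ t ∈ Icc a b, c ≤ F (γ t)) : c * degLen 1 a b γ ≤ degLen F a b γ := by
  rw [degLen, degLen, ← intervalIntegral.integral_const_mul]
  refine intervalIntegral.integral_mono_on hab
    ((intervalIntegrable_degLen continuous_one hγ a b).const_mul c)
    (intervalIntegrable_degLen hF hγ a b) fun t ht => ?_
  rw [Pi.one_apply, one_mul]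
  exact mul_le_mul_of_nonneg_right (hc t ht) (enorm2_nonneg _)

lemma enorm2_sub_le_degLen_one (hγ : LocallyLipschitz γ) (hab : a ≤ b) :
    enorm2 (γ b - γ a) ≤ degLen 1 a b γ := by
  set v := γ b - γ a with hv
  suffices h : enorm2 v * enorm2 v ≤ enorm2 v * degLen 1 a b γ by
    rcases (enorm2_nonneg v).eq_or_lt with h0 | hpos
    · exact h0 ▸ degLen_nonneg (fun _ => zero_le_one) hab
    · exact le_of_mul_le_mul_left h hpos
  have hintegrable := intervalIntegrable_comp_jet (g := fun z => v.1 * z.2.1 + v.2 * z.2.2)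
    (by fun_prop) hγ a b
  calc enorm2 v * enorm2 v = v.1 * ((γ b).1 - (γ a).1) + v.2 * ((γ b).2 - (γ a).2) := by
        rw [← sq, enorm2_sq, hv, Prod.fst_sub, Prod.snd_sub, sq, sq]
    _ = ∫ t in a..b, (v.1 * (deriv γ t).1 + v.2 * (deriv γ t).2) := by
        rw [intervalIntegral.integral_add
            (intervalIntegrable_comp_jet (g := fun z => v.1 * z.2.1) (by fun_prop) hγ a b)
            (intervalIntegrable_comp_jet (g := fun z => v.2 * z.2.2) (by fun_prop) hγ a b),
          intervalIntegral.integral_const_mul, intervalIntegral.integral_const_mul,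
          integral_deriv_fst hγ, integral_deriv_snd hγ]
    _ ≤ ∫ t in a..b, enorm2 v * ((1 : ℝ × ℝ → ℝ) (γ t) * enorm2 (deriv γ t)) := by
        refine intervalIntegral.integral_mono_on hab hintegrable
          ((intervalIntegrable_degLen continuous_one hγ a b).const_mul _) fun t _ => ?_
        rw [Pi.one_apply, one_mul]
        exact fst_mul_add_snd_mul_le_enorm2_mul v _
    _ = enorm2 v * degLen 1 a b γ := intervalIntegral.integral_const_mul _ _

lemma degLen_mono_right (hF : ∀ p, 0 ≤ F p) (hFc : Continuous F) (hγ : LocallyLipschitz γ)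
    {t : ℝ} (htb : t ≤ b) : degLen F a t γ ≤ degLen F a b γ := by
  rw [← degLen_add_adjacent hFc hγ a t b]
  exact le_add_of_nonneg_right (degLen_nonneg hF htb)

lemma abs_sArea_sub_le_sq_degLen_one (hγ : LocallyLipschitz γ) (hab : a ≤ b) :
    |sArea a b γ - (γ a).1 * ((γ b).2 - (γ a).2)| ≤ degLen 1 a b γ ^ 2 := by
  set L := degLen 1 a b γ with hL
  have hdefect : sArea a b γ - (γ a).1 * ((γ b).2 - (γ a).2)
      = ∫ t in a..b, ((γ t).1 - (γ a).1) * (deriv γ t).2 := by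
    rw [sArea_eq_integral hγ, ← integral_deriv_snd hγ, ← intervalIntegral.integral_const_mul,
      ← intervalIntegral.integral_sub (intervalIntegrable_sArea hγ a b)
        (intervalIntegrable_comp_jet (g := fun z => (γ a).1 * z.2.2) (by fun_prop) hγ a b)]
    simp only [sub_mul]
  have hbound : ∀ t ∈ Icc a b, |((γ t).1 - (γ a).1) * (deriv γ t).2|
      ≤ L * ((1 : ℝ × ℝ → ℝ) (γ t) * enorm2 (deriv γ t)) := fun t ht => by
    rw [abs_mul, Pi.one_apply, one_mul]
    exact mul_le_mul ((abs_fst_le_enorm2 (γ t - γ a)).trans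
        ((enorm2_sub_le_degLen_one hγ ht.1).trans
          (degLen_mono_right (fun _ => zero_le_one) continuous_one hγ ht.2)))
      (abs_snd_le_enorm2 _) (abs_nonneg _) (degLen_nonneg (fun _ => zero_le_one) hab)
  calc |sArea a b γ - (γ a).1 * ((γ b).2 - (γ a).2)|
      ≤ ∫ t in a..b, |((γ t).1 - (γ a).1) * (deriv γ t).2| :=
        hdefect ▸ intervalIntegral.abs_integral_le_integral_abs hab
    _ ≤ ∫ t in a..b, L * ((1 : ℝ × ℝ → ℝ) (γ t) * enorm2 (deriv γ t)) :=
        intervalIntegral.integral_mono_on hab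
          (intervalIntegrable_comp_jet (g := fun z => |(z.1.1 - (γ a).1) * z.2.2|)
            (by fun_prop) hγ a b)
          ((intervalIntegrable_degLen continuous_one hγ a b).const_mul _) hbound
    _ = L ^ 2 := by rw [intervalIntegral.integral_const_mul, ← degLen, ← hL, sq]

lemma degLen_comp_sub_right (F : ℝ × ℝ → ℝ) (γ : ℝ → ℝ × ℝ) (a b c : ℝ) :
    degLen F (a + c) (b + c) (fun t => γ (t - c)) = degLen F a b γ := by
  simp only [degLen, deriv_comp_sub_const]
  rw [intervalIntegral.integral_comp_sub_right (fun t => F (γ t) * enorm2 (deriv γ t)) c]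
  simp

lemma sArea_comp_sub_right (γ : ℝ → ℝ × ℝ) (a b c : ℝ) :
    sArea (a + c) (b + c) (fun t => γ (t - c)) = sArea a b γ := by
  simp only [sArea, deriv_comp_sub_const (fun s => (γ s).2)]
  rw [intervalIntegral.integral_comp_sub_right
    (fun t => (γ t).1 * deriv (fun s => (γ s).2) t) c]
  simp

lemma degLen_comp_sub_left (F : ℝ × ℝ → ℝ) (γ : ℝ → ℝ × ℝ) (a b : ℝ) :
    degLen F a b (fun t => γ (a + b - t)) = degLen F a b γ := by
  simp only [degLen, deriv_comp_const_sub, enorm2_neg]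
  rw [intervalIntegral.integral_comp_sub_left (fun t => F (γ t) * enorm2 (deriv γ t)) (a + b)]
  simp

lemma sArea_comp_sub_left (γ : ℝ → ℝ × ℝ) (a b : ℝ) :
    sArea a b (fun t => γ (a + b - t)) = -sArea a b γ := by
  simp only [sArea, deriv_comp_const_sub (fun s => (γ s).2), mul_neg]
  rw [intervalIntegral.integral_neg, intervalIntegral.integral_comp_sub_left
    (fun t => (γ t).1 * deriv (fun s => (γ s).2) t) (a + b)]
  simp

end LengthAndArea

section Distance

/-- The planar curve `γ` on `[a, b]` joins the projections of `P` and `Q` and sweeps the area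
`Q³ - P³`, so that its admissible lift starting at `P` ends at `Q`. These are the competitors in
the definition of `dCC F P Q`. -/
structure LiftJoins (a b : ℝ) (γ : ℝ → ℝ × ℝ) (P Q : ℝ × ℝ × ℝ) : Prop where
  le : a ≤ b
  locallyLipschitz : LocallyLipschitz γ
  left : γ a = (P.1, P.2.1)
  right : γ b = (Q.1, Q.2.1)
  sArea_eq : sArea a b γ = Q.2.2 - P.2.2

variable {F : ℝ × ℝ → ℝ} {P Q R : ℝ × ℝ × ℝ} {γ δ : ℝ → ℝ × ℝ} {a b c d : ℝ}

lemma LiftJoins.reverse (h : LiftJoins a b γ P Q) :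
    LiftJoins a b (fun t => γ (a + b - t)) Q P where
  le := h.le
  locallyLipschitz := h.locallyLipschitz.comp
    (ContDiff.locallyLipschitz (𝕂 := ℝ) (f := fun t : ℝ => a + b - t) (by fun_prop))
  left := by rw [add_sub_cancel_left, h.right]
  right := by rw [add_sub_cancel_right, h.left]
  sArea_eq := by rw [sArea_comp_sub_left, h.sArea_eq, neg_sub]

lemma LiftJoins.exists_trans (h : LiftJoins a b γ P Q) (h' : LiftJoins c d δ Q R)
    (hF : Continuous F) :
    ∃ ζ, LiftJoins a (d + (b - c)) ζ P R ∧
      degLen F a (d + (b - c)) ζ = degLen F a b γ + degLen F c d δ := by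
  set ζ : ℝ → ℝ × ℝ := fun t => γ (min t b) + δ (max c (t - (b - c))) - γ b with hζ
  have hjoin : δ c = γ b := h'.left.trans h.right.symm
  have hleft : EqOn ζ γ (Iic b) := fun t (ht : t ≤ b) => by
    simp only [hζ, min_eq_left ht, max_eq_left (show t - (b - c) ≤ c by linarith), hjoin,
      add_sub_cancel_right]
  have hright : EqOn ζ (fun t => δ (t - (b - c))) (Ici b) := fun t (ht : b ≤ t) => by
    simp only [hζ, min_eq_right ht, max_eq_right (show c ≤ t - (b - c) by linarith),
      add_sub_cancel_left]
  have hlip : LocallyLipschitz ζ :=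
    ((h.locallyLipschitz.comp (LocallyLipschitz.id.min_const b)).add
      (h'.locallyLipschitz.comp ((LocallyLipschitz.id.sub (LocallyLipschitz.const _)).const_max
        c))).sub (LocallyLipschitz.const _)
  have hle : b ≤ d + (b - c) := by linarith [h'.le]
  have hleft' : EqOn ζ γ (Ioo a b) := hleft.mono fun t ht => ht.2.le
  have hright' : EqOn ζ (fun t => δ (t - (b - c))) (Ioo b (d + (b - c))) :=
    hright.mono fun t ht => ht.1.le
  have hb : b = c + (b - c) := by ring
  refine ⟨ζ, ⟨h.le.trans hle, hlip, (hleft h.le).trans h.left, ?_, ?_⟩, ?_⟩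
  · simpa [h'.right] using hright hle
  · rw [← sArea_add_adjacent hlip a b, sArea_congr h.le hleft', sArea_congr hle hright', h.sArea_eq]
    nth_rewrite 1 [hb]
    rw [sArea_comp_sub_right, h'.sArea_eq]
    ring
  · rw [← degLen_add_adjacent hF hlip a b, degLen_congr h.le hleft', degLen_congr hle hright']
    nth_rewrite 2 [hb]
    rw [degLen_comp_sub_right]

lemma liftJoins_segment (P Q : ℝ × ℝ × ℝ) :
    ∃ γ z, LiftJoins 0 1 γ P (Q.1, Q.2.1, z) := by
  set γ : ℝ → ℝ × ℝ := fun t => (P.1 + t * (Q.1 - P.1), P.2.1 + t * (Q.2.1 - P.2.1)) with hγ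
  exact ⟨γ, P.2.2 + sArea 0 1 γ, zero_le_one,
    ContDiff.locallyLipschitz (𝕂 := ℝ) (by fun_prop), by simp [hγ], by simp [hγ], by simp⟩

-- The ellipse with half-axes `1` and `A / π` encloses the area `A`.
lemma liftJoins_ellipse (P : ℝ × ℝ × ℝ) (A : ℝ) :
    LiftJoins 0 (2 * Real.pi)
      (fun t => (P.1 + (Real.cos t - 1), P.2.1 + A / Real.pi * Real.sin t))
      P (P.1, P.2.1, P.2.2 + A) where
  le := by positivity
  locallyLipschitz := ContDiff.locallyLipschitz (𝕂 := ℝ) (by fun_prop)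
  left := by simp
  right := by simp
  sArea_eq := by
    have hderiv (t : ℝ) : deriv (fun s => P.2.1 + A / Real.pi * Real.sin s) t
        = A / Real.pi * Real.cos t :=
      (((Real.hasDerivAt_sin t).const_mul _).const_add _).deriv
    have hsplit (t : ℝ) : (P.1 + (Real.cos t - 1)) * (A / Real.pi * Real.cos t)
        = A / Real.pi * (P.1 - 1) * Real.cos t + A / Real.pi * Real.cos t ^ 2 := by ring
    simp only [sArea, hderiv, hsplit]
    rw [intervalIntegral.integral_add (Continuous.intervalIntegrable (by fun_prop) _ _)
        (Continuous.intervalIntegrable (by fun_prop) _ _),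
      intervalIntegral.integral_const_mul, intervalIntegral.integral_const_mul, integral_cos,
      integral_cos_sq]
    simp only [Real.sin_two_pi, Real.sin_zero]
    field_simp [Real.pi_ne_zero]
    ring

lemma exists_liftJoins (P Q : ℝ × ℝ × ℝ) : ∃ a b γ, LiftJoins a b γ P Q := by
  obtain ⟨γ, z, hγ⟩ := liftJoins_segment P Q
  have hloop := liftJoins_ellipse (Q.1, Q.2.1, z) (Q.2.2 - z)
  rw [add_sub_cancel] at hloop
  obtain ⟨ζ, hζ, -⟩ := hγ.exists_trans hloop continuous_zero
  exact ⟨_, _, ζ, hζ⟩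

lemma dCC_eq_sInf (F : ℝ × ℝ → ℝ) (P Q : ℝ × ℝ × ℝ) :
    dCC F P Q = sInf {x | ∃ a b γ, LiftJoins a b γ P Q ∧ degLen F a b γ = x} := by
  unfold dCC
  congr 1
  ext x
  constructor
  · rintro ⟨a, b, γ, ⟨hab, hlip, hl, hr⟩, hA, hx⟩
    exact ⟨a, b, γ, ⟨hab, hlip, hl, hr, hA⟩, hx⟩
  · rintro ⟨a, b, γ, h, hx⟩
    exact ⟨a, b, γ, ⟨h.le, h.locallyLipschitz, h.left, h.right⟩, h.sArea_eq, hx⟩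

lemma LiftJoins.dCC_le_degLen (h : LiftJoins a b γ P Q) (hF : ∀ p, 0 ≤ F p) :
    dCC F P Q ≤ degLen F a b γ := by
  rw [dCC_eq_sInf]
  refine csInf_le ⟨0, ?_⟩ ⟨a, b, γ, h, rfl⟩
  rintro _ ⟨a, b, γ, h, rfl⟩
  exact degLen_nonneg hF h.le

lemma exists_liftJoins_degLen_lt (h : dCC F P Q < c) :
    ∃ a b γ, LiftJoins a b γ P Q ∧ degLen F a b γ < c := by
  rw [dCC_eq_sInf] at h
  have hne : {x | ∃ a b γ, LiftJoins a b γ P Q ∧ degLen F a b γ = x}.Nonempty := by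
    obtain ⟨a, b, γ, hγ⟩ := exists_liftJoins P Q
    exact ⟨_, a, b, γ, hγ, rfl⟩
  obtain ⟨_, ⟨a, b, γ, hγ, rfl⟩, hlt⟩ := exists_lt_of_csInf_lt hne h
  exact ⟨a, b, γ, hγ, hlt⟩

lemma dCC_nonneg (hF : ∀ p, 0 ≤ F p) (P Q : ℝ × ℝ × ℝ) : 0 ≤ dCC F P Q := by
  rw [dCC_eq_sInf]
  refine Real.sInf_nonneg ?_
  rintro _ ⟨a, b, γ, h, rfl⟩
  exact degLen_nonneg hF h.le

lemma dCC_symm_le (hF : ∀ p, 0 ≤ F p) (P Q : ℝ × ℝ × ℝ) : dCC F Q P ≤ dCC F P Q := by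
  refine le_of_forall_gt fun c hc => ?_
  obtain ⟨a, b, γ, hγ, hlt⟩ := exists_liftJoins_degLen_lt hc
  exact (hγ.reverse.dCC_le_degLen hF).trans_lt (by rwa [degLen_comp_sub_left])

lemma dCC_symm (hF : ∀ p, 0 ≤ F p) (P Q : ℝ × ℝ × ℝ) : dCC F P Q = dCC F Q P :=
  le_antisymm (dCC_symm_le hF Q P) (dCC_symm_le hF P Q)

lemma dCC_triangle (hF : ∀ p, 0 ≤ F p) (hFc : Continuous F) (P Q R : ℝ × ℝ × ℝ) :
    dCC F P R ≤ dCC F P Q + dCC F Q R := by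
  refine le_of_forall_gt_imp_ge_of_dense fun c hc => ?_
  obtain ⟨x, y, hx, hy, rfl⟩ : ∃ x y, dCC F P Q < x ∧ dCC F Q R < y ∧ x + y = c :=
    ⟨dCC F P Q + (c - (dCC F P Q + dCC F Q R)) / 2, dCC F Q R + (c - (dCC F P Q + dCC F Q R)) / 2,
      by linarith, by linarith, by ring⟩
  obtain ⟨_, _, _, hγ, hγx⟩ := exists_liftJoins_degLen_lt hx
  obtain ⟨_, _, _, hδ, hδy⟩ := exists_liftJoins_degLen_lt hy
  obtain ⟨ζ, hζ, hlen⟩ := hγ.exists_trans hδ hFc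
  linarith [hζ.dCC_le_degLen hF]

lemma dCC_add_vertical (F : ℝ × ℝ → ℝ) (P Q : ℝ × ℝ × ℝ) (v : ℝ) :
    dCC F (P + (0, 0, v)) (Q + (0, 0, v)) = dCC F P Q := by
  simp [dCC]

end Distance

section LocalEstimates

variable {F : ℝ × ℝ → ℝ} {P Q : ℝ × ℝ × ℝ} {γ : ℝ → ℝ × ℝ} {a b c r : ℝ}

lemma continuous_degLen_right (hF : Continuous F) (hγ : LocallyLipschitz γ) (a : ℝ) :
    Continuous fun t => degLen F a t γ :=
  intervalIntegral.continuous_primitive (fun _ _ => intervalIntegrable_degLen hF hγ _ _) a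

-- The curve cannot leave the ball: at the first exit time it would already have length `c * r`.
lemma mul_degLen_one_le_degLen_of_lt (hF : ∀ p, 0 ≤ F p) (hFc : Continuous F)
    (hγ : LocallyLipschitz γ) (hab : a ≤ b) (hc : 0 < c)
    (hlow : ∀ p ∈ Metric.closedBall (γ a) r, c ≤ F p) (hlt : degLen F a b γ < c * r) :
    c * degLen 1 a b γ ≤ degLen F a b γ := by
  have hr : 0 < r := (pos_iff_pos_of_mul_pos ((degLen_nonneg hF hab).trans_lt hlt)).1 hc
  have hshort : ∀ t ∈ Icc a b, degLen 1 a t γ ≤ r → c * degLen 1 a t γ ≤ degLen F a b γ := by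
    intro t ht htr
    refine (mul_degLen_one_le_degLen hFc hγ ht.1 fun u hu => hlow _ ?_).trans
      (degLen_mono_right hF hFc hγ ht.2)
    rw [Metric.mem_closedBall, dist_eq_norm]
    exact (norm_le_enorm2 _).trans
      ((enorm2_sub_le_degLen_one hγ hu.1).trans
        ((degLen_mono_right (fun _ => zero_le_one) continuous_one hγ hu.2).trans htr))
  refine hshort b (right_mem_Icc.2 hab) (not_lt.1 fun hexit => ?_)
  obtain ⟨t, ht, htr⟩ := intermediate_value_Icc hab
    (continuous_degLen_right continuous_one hγ a).continuousOn
    (show r ∈ Icc (degLen 1 a a γ) (degLen 1 a b γ) from ⟨by simpa [degLen] using hr.le, hexit.le⟩)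
  have := hshort t ht htr.le
  simp only [htr] at this
  exact this.not_gt hlt

/-- The vertical coordinate of `Q` seen from `P`: it vanishes when `Q` is reached from `P` by the
admissible lift of a horizontal or vertical planar segment, and is quadratically small along
admissible curves. -/
def verticalDefect (P Q : ℝ × ℝ × ℝ) : ℝ := Q.2.2 - P.2.2 - P.1 * (Q.2.1 - P.2.1)

lemma LiftJoins.local_estimate (h : LiftJoins a b γ P Q) (hF : ∀ p, 0 ≤ F p)
    (hFc : Continuous F) (hc : 0 < c) (hlow : ∀ p ∈ Metric.closedBall (P.1, P.2.1) r, c ≤ F p)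
    (hlt : degLen F a b γ < c * r) :
    enorm2 ((Q.1, Q.2.1) - (P.1, P.2.1)) ≤ degLen F a b γ / c ∧
      |verticalDefect P Q| ≤ (degLen F a b γ / c) ^ 2 := by
  have hlen : degLen 1 a b γ ≤ degLen F a b γ / c := by
    rw [le_div_iff₀' hc]
    exact mul_degLen_one_le_degLen_of_lt hF hFc h.locallyLipschitz h.le hc (h.left ▸ hlow) hlt
  constructor
  · rw [← h.left, ← h.right]
    exact (enorm2_sub_le_degLen_one h.locallyLipschitz h.le).trans hlen
  · have hdefect := abs_sArea_sub_le_sq_degLen_one h.locallyLipschitz h.le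
    rw [h.sArea_eq, h.left, h.right] at hdefect
    exact hdefect.trans
      (pow_le_pow_left₀ (degLen_nonneg (fun _ => zero_le_one) h.le) hlen 2)

lemma dCC_local_estimate (hF : ∀ p, 0 ≤ F p) (hFc : Continuous F) (hc : 0 < c)
    (hlow : ∀ p ∈ Metric.closedBall (P.1, P.2.1) r, c ≤ F p) (hlt : dCC F P Q < c * r) :
    enorm2 ((Q.1, Q.2.1) - (P.1, P.2.1)) ≤ dCC F P Q / c ∧
      |verticalDefect P Q| ≤ (dCC F P Q / c) ^ 2 := by
  have happrox : ∀ᶠ y in 𝓝[>] dCC F P Q,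
      enorm2 ((Q.1, Q.2.1) - (P.1, P.2.1)) ≤ y / c ∧ |verticalDefect P Q| ≤ (y / c) ^ 2 := by
    filter_upwards [Ioo_mem_nhdsGT hlt] with y hy
    obtain ⟨a, b, γ, hγ, hγy⟩ := exists_liftJoins_degLen_lt hy.1
    obtain ⟨hplane, hvert⟩ := hγ.local_estimate hF hFc hc hlow (hγy.trans hy.2)
    have hle : degLen F a b γ / c ≤ y / c := by gcongr
    exact ⟨hplane.trans hle,
      hvert.trans (pow_le_pow_left₀ (div_nonneg (degLen_nonneg hF hγ.le) hc.le) hle 2)⟩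
  have hlim (f : ℝ → ℝ) (hf : Continuous f) : Tendsto f (𝓝[>] dCC F P Q) (𝓝 (f (dCC F P Q))) :=
    hf.continuousAt.mono_left nhdsWithin_le_nhds
  exact ⟨ge_of_tendsto (hlim (· / c) (by fun_prop)) (happrox.mono fun _ h => h.1),
    ge_of_tendsto (hlim (fun y => (y / c) ^ 2) (by fun_prop)) (happrox.mono fun _ h => h.2)⟩

end LocalEstimates

section ConstantSpeed

/-- The curve `Γ` has constant speed `l` on `[0, 1]` and realizes the distance `dCC F` between any
two of its points. -/
def HasConstantSpeed (F : ℝ × ℝ → ℝ) (Γ : ℝ → ℝ × ℝ × ℝ) (l : ℝ) : Prop :=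
  ∀ s t, 0 ≤ s → s ≤ t → t ≤ 1 → dCC F (Γ s) (Γ t) = (t - s) * l

variable {F : ℝ × ℝ → ℝ} {Γ : ℝ → ℝ × ℝ × ℝ} {P Q : ℝ × ℝ × ℝ} {l s t c r : ℝ}

lemma locallyLipschitz_projCurve (hΓ : LocallyLipschitz Γ) : LocallyLipschitz (projCurve Γ) :=
  (locallyLipschitz_fst hΓ).prodMk (locallyLipschitz_fst (locallyLipschitz_snd hΓ))

lemma Admissible.liftJoins (hΓ : Admissible 0 1 Γ) (hlip : LocallyLipschitz Γ) (hs : 0 ≤ s)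
    (hst : s ≤ t) (ht : t ≤ 1) : LiftJoins s t (projCurve Γ) (Γ s) (Γ t) where
  le := hst
  locallyLipschitz := locallyLipschitz_projCurve hlip
  left := rfl
  right := rfl
  sArea_eq := by
    rw [← integral_deriv_eq_sub_of_locallyLipschitz
      (locallyLipschitz_snd (locallyLipschitz_snd hlip))]
    refine intervalIntegral_congr_ae_Ioo hst ?_
    filter_upwards [hΓ] with u hu hmem
    exact (hu (Ioo_subset_Ioo hs ht hmem)).symm

lemma Admissible.dCC_le (hΓ : Admissible 0 1 Γ) (hlip : LocallyLipschitz Γ)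
    (hF : ∀ p, 0 ≤ F p)
    (hspeed : ∀ᵐ u, u ∈ Ioo (0 : ℝ) 1 → F (projCurve Γ u) * enorm2 (deriv (projCurve Γ) u) = l)
    (hs : 0 ≤ s) (hst : s ≤ t) (ht : t ≤ 1) : dCC F (Γ s) (Γ t) ≤ (t - s) * l :=
  calc dCC F (Γ s) (Γ t) ≤ degLen F s t (projCurve Γ) :=
        (hΓ.liftJoins hlip hs hst ht).dCC_le_degLen hF
    _ = ∫ _ in s..t, l := intervalIntegral_congr_ae_Ioo hst <| by
        filter_upwards [hspeed] with u hu hmem using hu (Ioo_subset_Ioo hs ht hmem)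
    _ = (t - s) * l := by simp

lemma IsMinGeodesic.dCC_le (hΓ : IsMinGeodesic F P Q Γ) (hF : ∀ p, 0 ≤ F p)
    (hFc : Continuous F) (hs : 0 ≤ s) (hst : s ≤ t) (ht : t ≤ 1) :
    dCC F (Γ s) (Γ t) ≤ (t - s) * dCC F P Q := by
  obtain ⟨-, -, -, Γj, hΓj, hlen, hclose⟩ := hΓ
  refine le_of_forall_pos_le_add fun ε hε => ?_
  obtain ⟨N, hN⟩ := hclose (ε / 3) (by positivity)
  obtain ⟨j, hj, hNj⟩ := (((hlen.const_mul (t - s)).eventually_lt_const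
    (show _ < (t - s) * dCC F P Q + ε / 3 by linarith)).and (eventually_ge_atTop N)).exists
  obtain ⟨hlip, hadm, -, -, hspeed⟩ := hΓj j
  have hmid := hadm.dCC_le hlip hF hspeed hs hst ht
  have hleft := hN j hNj s ⟨hs, hst.trans ht⟩
  have hright := hN j hNj t ⟨hs.trans hst, ht⟩
  rw [dCC_symm hF] at hleft
  linarith [dCC_triangle hF hFc (Γ s) (Γj j s) (Γ t),
    dCC_triangle hF hFc (Γj j s) (Γj j t) (Γ t)]

lemma IsMinGeodesic.hasConstantSpeed (hΓ : IsMinGeodesic F P Q Γ) (hF : ∀ p, 0 ≤ F p)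
    (hFc : Continuous F) : HasConstantSpeed F Γ (dCC F P Q) := by
  intro s t hs hst ht
  have hbefore := hΓ.dCC_le hF hFc le_rfl hs (hst.trans ht)
  have hafter := hΓ.dCC_le hF hFc (hs.trans hst) ht le_rfl
  rw [hΓ.1] at hbefore
  rw [hΓ.2.1] at hafter
  refine le_antisymm (hΓ.dCC_le hF hFc hs hst ht) ?_
  linarith [dCC_triangle hF hFc P (Γ s) Q, dCC_triangle hF hFc (Γ s) (Γ t) Q]

lemma HasConstantSpeed.nonneg (h : HasConstantSpeed F Γ l) (hF : ∀ p, 0 ≤ F p) : 0 ≤ l := by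
  simpa [h 0 1 le_rfl zero_le_one le_rfl] using dCC_nonneg hF (Γ 0) (Γ 1)

lemma HasConstantSpeed.dCC_eq (h : HasConstantSpeed F Γ l) (hF : ∀ p, 0 ≤ F p)
    (hs : s ∈ Icc (0 : ℝ) 1) (ht : t ∈ Icc (0 : ℝ) 1) : dCC F (Γ s) (Γ t) = |t - s| * l := by
  rcases le_total s t with hst | hts
  · rw [h s t hs.1 hst ht.2, abs_of_nonneg (sub_nonneg.2 hst)]
  · rw [dCC_symm hF, h t s ht.1 hts hs.2, abs_of_nonpos (sub_nonpos.2 hts), neg_sub]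

lemma HasConstantSpeed.local_estimate (h : HasConstantSpeed F Γ l) (hF : ∀ p, 0 ≤ F p)
    (hFc : Continuous F) (hc : 0 < c) (hs : s ∈ Icc (0 : ℝ) 1) (ht : t ∈ Icc (0 : ℝ) 1)
    (hlow : ∀ p ∈ Metric.closedBall (projCurve Γ s) r, c ≤ F p) (hlt : |t - s| * l < c * r) :
    enorm2 (projCurve Γ t - projCurve Γ s) ≤ l / c * |t - s| ∧
      |verticalDefect (Γ s) (Γ t)| ≤ (l / c * |t - s|) ^ 2 := by
  rw [← h.dCC_eq hF hs ht] at hlt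
  have hscale : dCC F (Γ s) (Γ t) / c = l / c * |t - s| := by
    rw [h.dCC_eq hF hs ht]
    ring
  exact hscale ▸ dCC_local_estimate hF hFc hc hlow hlt

lemma exists_closedBall_le_of_lt (hFc : Continuous F) {p : ℝ × ℝ} (hc : c < F p) :
    ∃ r > 0, ∀ q ∈ Metric.closedBall p r, c ≤ F q := by
  obtain ⟨r, hr, hball⟩ := Metric.nhds_basis_closedBall.mem_iff.1
    (hFc.continuousAt.eventually_const_lt hc)
  exact ⟨r, hr, fun q hq => (hball hq).le⟩

lemma HasConstantSpeed.exists_local_estimate (h : HasConstantSpeed F Γ l) (hF : ∀ p, 0 ≤ F p)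
    (hFc : Continuous F) {t₀ : ℝ} (ht₀ : t₀ ∈ Ioo (0 : ℝ) 1) (hpos : 0 < F (projCurve Γ t₀)) :
    ∃ δ > 0, ∃ C ≥ 0, Icc (t₀ - δ) (t₀ + δ) ⊆ Icc 0 1 ∧
      (∀ s ∈ Icc (t₀ - δ) (t₀ + δ), 0 < F (projCurve Γ s)) ∧
      ∀ s ∈ Icc (t₀ - δ) (t₀ + δ), ∀ t ∈ Icc (t₀ - δ) (t₀ + δ),
        enorm2 (projCurve Γ t - projCurve Γ s) ≤ C * |t - s| ∧
          |verticalDefect (Γ s) (Γ t)| ≤ (C * |t - s|) ^ 2 := by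
  obtain ⟨c, hc, hcF⟩ := exists_between hpos
  obtain ⟨r, hr, hball⟩ := exists_closedBall_le_of_lt hFc hcF
  have hl := h.nonneg hF
  have hlim : Tendsto (fun δ : ℝ => 2 * δ * l) (𝓝[>] 0) (𝓝 0) := by
    simpa using ((by fun_prop : Continuous fun δ : ℝ => 2 * δ * l).tendsto 0).mono_left
      nhdsWithin_le_nhds
  obtain ⟨δ, hδl, ⟨hδ, hδt⟩, -, hδt'⟩ := ((hlim.eventually_lt_const
    (show 0 < c * (r / 2) by positivity)).and ((Filter.inter_mem (Ioo_mem_nhdsGT ht₀.1)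
      (Ioo_mem_nhdsGT (sub_pos.2 ht₀.2))))).exists
  have hsub : Icc (t₀ - δ) (t₀ + δ) ⊆ Icc 0 1 := Icc_subset_Icc (by linarith) (by linarith)
  have hnear : ∀ s ∈ Icc (t₀ - δ) (t₀ + δ),
      projCurve Γ s ∈ Metric.closedBall (projCurve Γ t₀) (r / 2) := fun s hs => by
    have hdist : |s - t₀| ≤ 2 * δ := abs_le.2 ⟨by linarith [hs.1], by linarith [hs.2]⟩
    have hlt : |s - t₀| * l < c * (r / 2) := by nlinarith
    have hplane := (h.local_estimate hF hFc hc (Ioo_subset_Icc_self ht₀) (hsub hs)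
      (fun p hp => hball p (Metric.closedBall_subset_closedBall (by linarith) hp)) hlt).1
    rw [Metric.mem_closedBall, dist_eq_norm]
    refine (norm_le_enorm2 _).trans (hplane.trans ?_)
    rw [div_mul_eq_mul_div, div_le_iff₀ hc]
    linarith
  refine ⟨δ, hδ, l / c, by positivity, hsub, fun s hs => hc.trans_le (hball _ ?_),
    fun s hs t ht => h.local_estimate (r := r / 2) hF hFc hc (hsub hs) (hsub ht)
      (fun p hp => hball p ?_) ?_⟩
  · exact Metric.closedBall_subset_closedBall (by linarith) (hnear s hs)
  · have hdist := Metric.mem_closedBall.1 (hnear s hs)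
    exact Metric.closedBall_subset_closedBall' (by linarith) hp
  · have hdist : |t - s| ≤ 2 * δ := abs_le.2 ⟨by linarith [hs.2, ht.1], by linarith [hs.1, ht.2]⟩
    nlinarith

lemma HasConstantSpeed.speed_le_of_lt (h : HasConstantSpeed F Γ l) (hF : ∀ p, 0 ≤ F p)
    (hFc : Continuous F) (ht : t ∈ Ioo (0 : ℝ) 1) {v : ℝ × ℝ} (hv : HasDerivAt (projCurve Γ) v t)
    (hc : 0 < c) (hcF : c < F (projCurve Γ t)) : c * enorm2 v ≤ l := by
  obtain ⟨r, hr, hball⟩ := exists_closedBall_le_of_lt hFc hcF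
  have hslope := (continuous_enorm2.tendsto v).comp hv.tendsto_slope_zero_right
  rw [mul_comm, ← le_div_iff₀ hc]
  refine le_of_tendsto hslope ?_
  have hlim : Tendsto (fun u : ℝ => |t + u - t| * l) (𝓝[>] 0) (𝓝 0) := by
    simpa using ((by fun_prop : Continuous fun u : ℝ => |t + u - t| * l).tendsto 0).mono_left
      nhdsWithin_le_nhds
  filter_upwards [hlim.eventually_lt_const (show 0 < c * r by positivity),
    Ioo_mem_nhdsGT (sub_pos.2 ht.2)] with u hlt hu
  have hplane := (h.local_estimate hF hFc hc (Ioo_subset_Icc_self ht)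
    ⟨by linarith [ht.1, hu.1], by linarith [hu.2]⟩ hball hlt).1
  rw [add_sub_cancel_left, abs_of_pos hu.1] at hplane
  rw [Function.comp_apply, enorm2_smul, abs_of_pos (inv_pos.2 hu.1), inv_mul_le_iff₀ hu.1]
  linarith

lemma HasConstantSpeed.speed_le (h : HasConstantSpeed F Γ l) (hF : ∀ p, 0 ≤ F p)
    (hFc : Continuous F) (ht : t ∈ Ioo (0 : ℝ) 1) {v : ℝ × ℝ}
    (hv : HasDerivAt (projCurve Γ) v t) : F (projCurve Γ t) * enorm2 v ≤ l := by
  rcases (hF (projCurve Γ t)).eq_or_lt with hzero | hpos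
  · rw [← hzero, zero_mul]
    exact h.nonneg hF
  have hlim : Tendsto (fun c => c * enorm2 v) (𝓝[<] F (projCurve Γ t))
      (𝓝 (F (projCurve Γ t) * enorm2 v)) :=
    (Continuous.tendsto (by fun_prop) _).mono_left nhdsWithin_le_nhds
  refine le_of_tendsto hlim ?_
  filter_upwards [Ioo_mem_nhdsLT hpos] with c hc
  exact h.speed_le_of_lt hF hFc ht hv hc.1 hc.2

end ConstantSpeed

section HorizontalArc

lemma eq_of_abs_sub_le_mul_sq {f : ℝ → ℝ} {a b C : ℝ} (hab : a ≤ b)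
    (h : ∀ u ∈ Icc a b, ∀ v ∈ Icc a b, u ≤ v → |f v - f u| ≤ C * (v - u) ^ 2) : f b = f a := by
  have hsym : ∀ u ∈ Icc a b, ∀ v ∈ Icc a b, |f v - f u| ≤ C * (v - u) ^ 2 := by
    intro u hu v hv
    rcases le_total u v with huv | hvu
    · exact h u hu v hv huv
    · rw [abs_sub_comm, ← neg_sub u v, neg_sq]
      exact h v hv u hu hvu
  have hderiv : ∀ u ∈ Icc a b, HasDerivWithinAt f 0 (Icc a b) u := fun u hu => by
    rw [hasDerivWithinAt_iff_isLittleO]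
    simp only [smul_zero, sub_zero]
    refine Asymptotics.IsBigO.trans_isLittleO (g := fun v => ‖v - u‖ ^ 2) ?_
      ((Asymptotics.isLittleO_pow_sub_sub u one_lt_two).mono nhdsWithin_le_nhds)
    refine Asymptotics.IsBigO.of_bound C (eventually_mem_nhdsWithin.mono fun v hv => ?_)
    simpa using hsym u hu v hv
  exact constant_of_derivWithin_zero (fun u hu => (hderiv u hu).differentiableWithinAt)
    (fun u hu => (hderiv u (Ico_subset_Icc_self hu)).derivWithin
      (uniqueDiffOn_Icc (hu.1.trans_lt hu.2) u (Ico_subset_Icc_self hu))) b ⟨hab, le_rfl⟩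

lemma exists_degLen_one_le {γ : ℝ → ℝ × ℝ} (hγ : LocallyLipschitz γ) (a b : ℝ) :
    ∃ K, ∀ u ∈ Icc a b, ∀ v ∈ Icc a b, u ≤ v → degLen 1 u v γ ≤ K * (v - u) := by
  obtain ⟨K, hK⟩ := ((LocallyBoundedMeasurable.deriv_of_locallyLipschitz hγ).continuous_comp
    continuous_enorm2).exists_norm_le a b
  refine ⟨K, fun u hu v hv huv => ?_⟩
  calc degLen 1 u v γ ≤ ∫ _ in u..v, K :=
        intervalIntegral.integral_mono_on huv (intervalIntegrable_degLen continuous_one hγ u v)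
          intervalIntegrable_const fun w hw => by
            simpa using (le_abs_self _).trans (hK w ⟨hu.1.trans hw.1, hw.2.trans hv.2⟩)
    _ = K * (v - u) := by simp [mul_comm]

/-- On `[s, t] ⊆ [0, 1]` the locally Lipschitz planar curve `γ` is the projection of `Γ`, it avoids
the zeros of `F`, and `Γ` is its horizontal lift: vertical displacements of `Γ` are signed areas
of `γ`. Since `Γ` is unconstrained off `[0, 1]`, `γ` is only required to agree with the projection
of `Γ` on `[s, t]`. -/
structure IsHorizontalArc (F : ℝ × ℝ → ℝ) (Γ : ℝ → ℝ × ℝ × ℝ) (s t : ℝ) (γ : ℝ → ℝ × ℝ) :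
    Prop where
  lt : s < t
  nonneg : 0 ≤ s
  le_one : t ≤ 1
  locallyLipschitz : LocallyLipschitz γ
  eqOn : EqOn γ (projCurve Γ) (Icc s t)
  pos : ∀ u ∈ Icc s t, 0 < F (γ u)
  sArea_eq : ∀ u v, s ≤ u → u ≤ v → v ≤ t → sArea u v γ = (Γ v).2.2 - (Γ u).2.2

variable {F : ℝ × ℝ → ℝ} {Γ : ℝ → ℝ × ℝ × ℝ} {γ : ℝ → ℝ × ℝ} {l s t : ℝ}

lemma IsHorizontalArc.mono (h : IsHorizontalArc F Γ s t γ) {s' t' : ℝ} (hs : s ≤ s')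
    (hst : s' < t') (ht : t' ≤ t) : IsHorizontalArc F Γ s' t' γ where
  lt := hst
  nonneg := h.nonneg.trans hs
  le_one := ht.trans h.le_one
  locallyLipschitz := h.locallyLipschitz
  eqOn := h.eqOn.mono (Icc_subset_Icc hs ht)
  pos := fun u hu => h.pos u (Icc_subset_Icc hs ht hu)
  sArea_eq := fun u v hu huv hv => h.sArea_eq u v (hs.trans hu) huv (hv.trans ht)

-- The vertical coordinate minus the signed area has quadratic increments, hence is constant.
lemma sArea_eq_of_verticalDefect_le (hγ : LocallyLipschitz γ) (hst : s ≤ t)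
    (heq : EqOn γ (projCurve Γ) (Icc s t)) {C : ℝ}
    (hdefect : ∀ u ∈ Icc s t, ∀ v ∈ Icc s t, |verticalDefect (Γ u) (Γ v)| ≤ (C * |v - u|) ^ 2) :
    sArea s t γ = (Γ t).2.2 - (Γ s).2.2 := by
  obtain ⟨K, hK⟩ := exists_degLen_one_le hγ s t
  suffices hconst : (Γ t).2.2 - sArea s t γ = (Γ s).2.2 - sArea s s γ by
    have hempty : sArea s s γ = 0 := intervalIntegral.integral_same
    linarith
  refine eq_of_abs_sub_le_mul_sq (f := fun v => (Γ v).2.2 - sArea s v γ) (C := C ^ 2 + K ^ 2) hst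
    fun u hu v hv huv => ?_
  have hlift : |verticalDefect (Γ u) (Γ v)| ≤ C ^ 2 * (v - u) ^ 2 := by
    simpa [mul_pow, sq_abs] using hdefect u hu v hv
  have harea : |sArea u v γ - (γ u).1 * ((γ v).2 - (γ u).2)| ≤ K ^ 2 * (v - u) ^ 2 := by
    rw [← mul_pow]
    exact (abs_sArea_sub_le_sq_degLen_one hγ huv).trans
      (pow_le_pow_left₀ (degLen_nonneg (fun _ => zero_le_one) huv) (hK u hu v hv huv) 2)
  have hsplit : (Γ v).2.2 - sArea s v γ - ((Γ u).2.2 - sArea s u γ)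
      = verticalDefect (Γ u) (Γ v) - (sArea u v γ - (γ u).1 * ((γ v).2 - (γ u).2)) := by
    rw [← sArea_add_adjacent hγ s u v, heq hu, heq hv]
    simp only [verticalDefect, projCurve]
    ring
  rw [hsplit, add_mul]
  exact (abs_sub _ _).trans (add_le_add hlift harea)

lemma HasConstantSpeed.exists_isHorizontalArc (h : HasConstantSpeed F Γ l) (hF : ∀ p, 0 ≤ F p)
    (hFc : Continuous F) {t₀ : ℝ} (ht₀ : t₀ ∈ Ioo (0 : ℝ) 1) (hpos : 0 < F (projCurve Γ t₀)) :
    ∃ δ > 0, ∃ γ, IsHorizontalArc F Γ (t₀ - δ) (t₀ + δ) γ := by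
  obtain ⟨δ, hδ, C, hC, hsub, hposδ, hest⟩ := h.exists_local_estimate hF hFc ht₀ hpos
  have hlt : t₀ - δ < t₀ + δ := by linarith
  have hlip : LipschitzOnWith ⟨C, hC⟩ (projCurve Γ) (Icc (t₀ - δ) (t₀ + δ)) :=
    LipschitzOnWith.of_dist_le_mul fun u hu v hv => by
      rw [dist_eq_norm, Real.dist_eq]
      exact (norm_le_enorm2 _).trans (hest v hv u hu).1
  obtain ⟨γ, hγ, heq⟩ := exists_lipschitzWith_eqOn_Icc hlt.le hlip
  refine ⟨δ, hδ, γ, hlt, (hsub (left_mem_Icc.2 hlt.le)).1, (hsub (right_mem_Icc.2 hlt.le)).2,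
    hγ.locallyLipschitz, heq, fun u hu => heq hu ▸ hposδ u hu, fun u v hu huv hv => ?_⟩
  have hmono : Icc u v ⊆ Icc (t₀ - δ) (t₀ + δ) := Icc_subset_Icc hu hv
  exact sArea_eq_of_verticalDefect_le hγ.locallyLipschitz huv (heq.mono hmono)
    fun a ha b hb => (hest a (hmono ha) b (hmono hb)).2

lemma IsHorizontalArc.speed_le (h : IsHorizontalArc F Γ s t γ) (hΓ : HasConstantSpeed F Γ l)
    (hF : ∀ p, 0 ≤ F p) (hFc : Continuous F) :
    ∀ᵐ u, u ∈ Ioo s t → F (γ u) * enorm2 (deriv γ u) ≤ l := by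
  filter_upwards [ae_differentiableAt_of_locallyLipschitz h.locallyLipschitz] with u hu hmem
  have hderiv : HasDerivAt (projCurve Γ) (deriv γ u) u :=
    hu.hasDerivAt.congr_of_eventuallyEq
      ((h.eqOn.symm.mono Ioo_subset_Icc_self).eventuallyEq_of_mem (Ioo_mem_nhds hmem.1 hmem.2))
  rw [h.eqOn (Ioo_subset_Icc_self hmem)]
  exact hΓ.speed_le hF hFc ⟨h.nonneg.trans_lt hmem.1, hmem.2.trans_le h.le_one⟩ hderiv

end HorizontalArc

section FirstVariation

lemma hasDerivAt_integral_comp_locallyBoundedMeasurable {X : Type*} [PseudoMetricSpace X]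
    [ProperSpace X] [MeasurableSpace X] [OpensMeasurableSpace X] [SecondCountableTopology X]
    {H H' : ℝ × X → ℝ} {w : ℝ → X} (hH : Continuous H) (hH' : Continuous H')
    (hw : LocallyBoundedMeasurable w)
    (hderiv : ∀ x z, HasDerivAt (fun y => H (y, z)) (H' (x, z)) x) (a b x₀ : ℝ) :
    HasDerivAt (fun x => ∫ u in a..b, H (x, w u)) (∫ u in a..b, H' (x₀, w u)) x₀ := by
  have hslice {G : ℝ × X → ℝ} (hG : Continuous G) (x : ℝ) :
      LocallyBoundedMeasurable fun u => G (x, w u) :=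
    hw.continuous_comp (g := fun z => G (x, z)) (by fun_prop)
  obtain ⟨M, hM⟩ := ((isCompact_closedBall x₀ 1).prod (hw.isBounded_image (uIcc a b)
    isCompact_uIcc).isCompact_closure).exists_bound_of_continuousOn hH'.continuousOn
  refine (intervalIntegral.hasDerivAt_integral_of_dominated_loc_of_deriv_le
    (F := fun x u => H (x, w u)) (F' := fun x u => H' (x, w u)) (bound := fun _ => M)
    (Metric.closedBall_mem_nhds x₀ one_pos)
    (Eventually.of_forall fun x => (hslice hH x).measurable.aestronglyMeasurable)
    ((hslice hH x₀).intervalIntegrable a b) (hslice hH' x₀).measurable.aestronglyMeasurable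
    (Eventually.of_forall fun u hu x hx => hM _ ⟨hx, ?_⟩) intervalIntegrable_const
    (Eventually.of_forall fun u _ x _ => hderiv x (w u))).2
  exact subset_closure (mem_image_of_mem w (uIoc_subset_uIcc hu))

/-- The energy `∫ W(γ) |γ'|²`. Critical points are the same as for the degenerate length with
`F = √W`, but the integrand is smooth in `γ'`. -/
def energy (W : ℝ × ℝ → ℝ) (a b : ℝ) (γ : ℝ → ℝ × ℝ) : ℝ :=
  ∫ u in a..b, W (γ u) * enorm2 (deriv γ u) ^ 2

/-- The first variation of `energy W a b` at `γ` in the direction `η`. -/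
def energyVar (W : ℝ × ℝ → ℝ) (a b : ℝ) (γ η : ℝ → ℝ × ℝ) : ℝ :=
  ∫ u in a..b, (2 * W (γ u) * ((deriv γ u).1 * (deriv η u).1 + (deriv γ u).2 * (deriv η u).2)
    + enorm2 (deriv γ u) ^ 2 * fderiv ℝ W (γ u) (η u))

/-- The first variation of `sArea a b` at `γ` in a direction `η` vanishing at `a` and `b`, after
integration by parts. -/
def areaVar (a b : ℝ) (γ η : ℝ → ℝ × ℝ) : ℝ :=
  ∫ u in a..b, ((η u).1 * (deriv γ u).2 - (deriv γ u).1 * (η u).2)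

/-- Variations vanishing at the endpoints of `[a, b]`. Those enclosing zero signed area change the
area of a curve exactly linearly. -/
structure IsTestField (a b : ℝ) (η : ℝ → ℝ × ℝ) : Prop where
  locallyLipschitz : LocallyLipschitz η
  left : η a = 0
  right : η b = 0
  sArea_eq_zero : sArea a b η = 0

variable {W F : ℝ × ℝ → ℝ} {γ η : ℝ → ℝ × ℝ} {φ : ℝ → ℝ} {a b l x : ℝ}

lemma isTestField_fst (hφ : LocallyLipschitz φ) (ha : φ a = 0) (hb : φ b = 0) :
    IsTestField a b fun u => (φ u, 0) where
  locallyLipschitz := hφ.prodMk (.const 0)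
  left := by simp [ha]
  right := by simp [hb]
  sArea_eq_zero := by simp [sArea]

lemma isTestField_snd (hφ : LocallyLipschitz φ) (ha : φ a = 0) (hb : φ b = 0) :
    IsTestField a b fun u => (0, φ u) where
  locallyLipschitz := (LocallyLipschitz.const 0).prodMk hφ
  left := by simp [ha]
  right := by simp [hb]
  sArea_eq_zero := by simp [sArea]

lemma locallyLipschitz_add_smul (hγ : LocallyLipschitz γ) (hη : LocallyLipschitz η) (x : ℝ) :
    LocallyLipschitz fun u => γ u + x • η u :=
  hγ.add (locallyLipschitz_const_smul hη x)

lemma ae_deriv_add_smul (hγ : LocallyLipschitz γ) (hη : LocallyLipschitz η) (x : ℝ) :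
    ∀ᵐ u, deriv (fun v => γ v + x • η v) u = deriv γ u + x • deriv η u := by
  filter_upwards [ae_differentiableAt_of_locallyLipschitz hγ,
    ae_differentiableAt_of_locallyLipschitz hη] with u hγu hηu
  exact (hγu.hasDerivAt.add (hηu.hasDerivAt.const_smul x)).deriv

lemma intervalIntegrable_comp_jets {g : ((ℝ × ℝ) × ℝ × ℝ) × (ℝ × ℝ) × ℝ × ℝ → ℝ}
    (hg : Continuous g) (hγ : LocallyLipschitz γ) (hη : LocallyLipschitz η) (a b : ℝ) :
    IntervalIntegrable (fun u => g ((γ u, deriv γ u), (η u, deriv η u))) volume a b :=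
  (((locallyBoundedMeasurable_jet hγ).prodMk
    (locallyBoundedMeasurable_jet hη)).continuous_comp hg).intervalIntegrable a b

lemma intervalIntegrable_energy (hW : Continuous W) (hγ : LocallyLipschitz γ) (a b : ℝ) :
    IntervalIntegrable (fun u => W (γ u) * enorm2 (deriv γ u) ^ 2) volume a b :=
  intervalIntegrable_comp_jet (g := fun z => W z.1 * enorm2 z.2 ^ 2) (by fun_prop) hγ a b

lemma hasDerivAt_enorm2_sq_add_smul (v w : ℝ × ℝ) (x : ℝ) :
    HasDerivAt (fun y : ℝ => enorm2 (v + y • w) ^ 2)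
      (2 * ((v + x • w).1 * w.1 + (v + x • w).2 * w.2)) x := by
  have hcoord (p q : ℝ) : HasDerivAt (fun y : ℝ => p + y * q) q x := by
    simpa using ((hasDerivAt_id x).mul_const q).const_add p
  simp only [enorm2_sq, Prod.fst_add, Prod.snd_add, Prod.smul_fst, Prod.smul_snd, smul_eq_mul]
  refine (((hcoord v.1 w.1).pow 2).add ((hcoord v.2 w.2).pow 2)).congr_deriv ?_
  push_cast
  ring

lemma hasDerivAt_energy_add_smul (hW : ContDiff ℝ 1 W) (hγ : LocallyLipschitz γ)
    (hη : LocallyLipschitz η) (a b : ℝ) :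
    HasDerivAt (fun x : ℝ => energy W a b fun u => γ u + x • η u) (energyVar W a b γ η) 0 := by
  have hWc := hW.continuous
  have hline (p q : ℝ × ℝ) (x : ℝ) : HasDerivAt (fun y : ℝ => W (p + y • q))
      (fderiv ℝ W (p + x • q) q) x := by
    have hinner : HasDerivAt (fun y : ℝ => p + y • q) q x := by
      simpa using ((hasDerivAt_id x).smul_const q).const_add p
    exact (hW.differentiable one_ne_zero _).hasFDerivAt.comp_hasDerivAt x hinner
  have hparam := hasDerivAt_integral_comp_locallyBoundedMeasurable
    (H := fun z => W (z.2.1.1 + z.1 • z.2.2.1) * enorm2 (z.2.1.2 + z.1 • z.2.2.2) ^ 2)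
    (H' := fun z => fderiv ℝ W (z.2.1.1 + z.1 • z.2.2.1) z.2.2.1
        * enorm2 (z.2.1.2 + z.1 • z.2.2.2) ^ 2
      + W (z.2.1.1 + z.1 • z.2.2.1) * (2 * ((z.2.1.2 + z.1 • z.2.2.2).1 * z.2.2.2.1
        + (z.2.1.2 + z.1 • z.2.2.2).2 * z.2.2.2.2)))
    (by fun_prop) (by fun_prop)
    ((locallyBoundedMeasurable_jet hγ).prodMk (locallyBoundedMeasurable_jet hη))
    (fun x z => (hline z.1.1 z.2.1 x).mul (hasDerivAt_enorm2_sq_add_smul z.1.2 z.2.2 x)) a b 0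
  have henergy (x : ℝ) : (energy W a b fun u => γ u + x • η u)
      = ∫ u in a..b, W (γ u + x • η u) * enorm2 (deriv γ u + x • deriv η u) ^ 2 := by
    refine intervalIntegral.integral_congr_ae ?_
    filter_upwards [ae_deriv_add_smul hγ hη x] with u hu _
    rw [hu]
  simp only [henergy]
  refine hparam.congr_deriv (intervalIntegral.integral_congr fun u _ => ?_)
  simp only [zero_smul, add_zero]
  ring

lemma IsTestField.integral_fst_mul_deriv_snd (hη : IsTestField a b η) (hγ : LocallyLipschitz γ) :
    ∫ u in a..b, (γ u).1 * (deriv η u).2 = -∫ u in a..b, (deriv γ u).1 * (η u).2 := by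
  have hparts := (absolutelyContinuousOnInterval_of_locallyLipschitz
    (locallyLipschitz_fst hγ) a b).integral_mul_deriv_eq_deriv_mul
    (absolutelyContinuousOnInterval_of_locallyLipschitz
      (locallyLipschitz_snd hη.locallyLipschitz) a b)
  simp only [hη.left, hη.right, Prod.snd_zero, mul_zero, sub_zero, zero_sub] at hparts
  convert hparts using 1
  · refine intervalIntegral.integral_congr_ae ?_
    filter_upwards [ae_differentiableAt_of_locallyLipschitz hη.locallyLipschitz] with u hu _
    rw [deriv_snd hu]
  · congr 1
    refine intervalIntegral.integral_congr_ae ?_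
    filter_upwards [ae_differentiableAt_of_locallyLipschitz hγ] with u hu _
    rw [deriv_fst hu]

lemma IsTestField.sArea_add_smul (hη : IsTestField a b η) (hγ : LocallyLipschitz γ) (x : ℝ) :
    (sArea a b fun u => γ u + x • η u) = sArea a b γ + x * areaVar a b γ η := by
  have hηl := hη.locallyLipschitz
  have hintegrable (g : ((ℝ × ℝ) × ℝ × ℝ) × (ℝ × ℝ) × ℝ × ℝ → ℝ) (hg : Continuous g) :=
    intervalIntegrable_comp_jets hg hγ hηl a b
  have hcross : areaVar a b γ η
      = ∫ u in a..b, ((γ u).1 * (deriv η u).2 + (η u).1 * (deriv γ u).2) := by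
    rw [intervalIntegral.integral_add (hintegrable (fun z => z.1.1.1 * z.2.2.2) (by fun_prop))
        (hintegrable (fun z => z.2.1.1 * z.1.2.2) (by fun_prop)), hη.integral_fst_mul_deriv_snd hγ,
      neg_add_eq_sub, areaVar, intervalIntegral.integral_sub
        (hintegrable (fun z => z.2.1.1 * z.1.2.2) (by fun_prop))
        (hintegrable (fun z => z.1.2.1 * z.2.1.2) (by fun_prop))]
  have hquad : ∫ u in a..b, x ^ 2 * ((η u).1 * (deriv η u).2) = 0 := by
    rw [intervalIntegral.integral_const_mul, ← sArea_eq_integral hηl, hη.sArea_eq_zero, mul_zero]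
  rw [sArea_eq_integral (locallyLipschitz_add_smul hγ hηl x), sArea_eq_integral hγ, hcross,
    ← intervalIntegral.integral_const_mul, ← add_zero (_ + _), ← hquad,
    ← intervalIntegral.integral_add, ← intervalIntegral.integral_add]
  · refine intervalIntegral.integral_congr_ae ?_
    filter_upwards [ae_deriv_add_smul hγ hηl x] with u hu _
    simp only [hu, Prod.fst_add, Prod.snd_add, Prod.smul_fst, Prod.smul_snd, smul_eq_mul]
    ring
  · exact hintegrable (fun z => z.1.1.1 * z.1.2.2 + x * (z.1.1.1 * z.2.2.2 + z.2.1.1 * z.1.2.2))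
      (by fun_prop)
  · exact hintegrable (fun z => x ^ 2 * (z.2.1.1 * z.2.2.2)) (by fun_prop)
  · exact hintegrable (fun z => z.1.1.1 * z.1.2.2) (by fun_prop)
  · exact hintegrable (fun z => x * (z.1.1.1 * z.2.2.2 + z.2.1.1 * z.1.2.2)) (by fun_prop)

lemma degLen_le_energy (hWF : ∀ p, W p = F p ^ 2) (hFc : Continuous F)
    (hγ : LocallyLipschitz γ) (hab : a ≤ b) (hl : 0 < l) :
    degLen F a b γ ≤ (energy W a b γ / l + l * (b - a)) / 2 := by
  have hWc : Continuous W := by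
    rw [funext hWF]
    fun_prop
  have hintegrable := ((intervalIntegrable_energy hWc hγ a b).div_const l).add
    (intervalIntegrable_const (c := l))
  have hmean : (energy W a b γ / l + l * (b - a)) / 2
      = ∫ u in a..b, (W (γ u) * enorm2 (deriv γ u) ^ 2 / l + l) / 2 := by
    rw [intervalIntegral.integral_div, intervalIntegral.integral_add
        ((intervalIntegrable_energy hWc hγ a b).div_const l) intervalIntegrable_const,
      intervalIntegral.integral_div, intervalIntegral.integral_const, smul_eq_mul, mul_comm l]
    rfl
  rw [hmean]
  refine intervalIntegral.integral_mono_on hab (intervalIntegrable_degLen hFc hγ a b)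
    (hintegrable.div_const 2) fun u _ => ?_
  rw [hWF, ← mul_pow, le_div_iff₀ two_pos, ← sub_nonneg]
  generalize F (γ u) * enorm2 (deriv γ u) = y
  have hsq : y ^ 2 / l + l - y * 2 = (y - l) ^ 2 / l := by
    field_simp
    ring
  rw [hsq]
  positivity

lemma energy_le_of_speed_le (hWF : ∀ p, W p = F p ^ 2) (hF : ∀ p, 0 ≤ F p) (hFc : Continuous F)
    (hγ : LocallyLipschitz γ) (hab : a ≤ b)
    (hspeed : ∀ᵐ u, u ∈ Ioo a b → F (γ u) * enorm2 (deriv γ u) ≤ l) :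
    energy W a b γ ≤ l ^ 2 * (b - a) := by
  have hWc : Continuous W := by
    rw [funext hWF]
    fun_prop
  calc energy W a b γ ≤ ∫ _ in a..b, l ^ 2 := by
        refine intervalIntegral_mono_ae_Ioo hab (intervalIntegrable_energy hWc hγ a b)
          intervalIntegrable_const ?_
        filter_upwards [hspeed] with u hu hmem
        rw [hWF, ← mul_pow]
        exact pow_le_pow_left₀ (mul_nonneg (hF _) (enorm2_nonneg _)) (hu hmem) 2
    _ = l ^ 2 * (b - a) := by simp [mul_comm]

end FirstVariation

section DuBoisReymond

lemma LocallyBoundedMeasurable.locallyIntegrable {f : ℝ → ℝ} (hf : LocallyBoundedMeasurable f) :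
    LocallyIntegrable f := fun t =>
  ⟨Icc (t - 1) (t + 1), Icc_mem_nhds (by linarith) (by linarith),
    (intervalIntegrable_iff_integrableOn_Icc_of_le (by linarith)).1 (hf.intervalIntegrable _ _)⟩

lemma LocallyBoundedMeasurable.ae_hasDerivAt_integral {f : ℝ → ℝ} (hf : LocallyBoundedMeasurable f)
    (a : ℝ) : ∀ᵐ t, HasDerivAt (fun t => ∫ u in a..t, f u) (f t) t :=
  (LocallyIntegrable.ae_hasDerivAt_integral hf.locallyIntegrable).mono fun _ ht => ht a

variable {V Z : ℝ → ℝ} {s t : ℝ}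

-- Test against a primitive of `V - c`, where `c` is the mean of `V`.
lemma exists_ae_eq_const_of_integral_mul_deriv_eq_zero (hst : s < t)
    (hV : LocallyBoundedMeasurable V)
    (h : ∀ φ, LocallyLipschitz φ → φ s = 0 → φ t = 0 → ∫ u in s..t, V u * deriv φ u = 0) :
    ∃ c, ∀ᵐ u, u ∈ Ioo s t → V u = c := by
  set c := (∫ u in s..t, V u) / (t - s) with hc
  have hR : LocallyBoundedMeasurable fun u => V u - c :=
    hV.continuous_comp (g := fun y => y - c) (by fun_prop)
  set φ : ℝ → ℝ := fun u => ∫ v in s..u, (V v - c) with hφ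
  have hφlip : LocallyLipschitz φ := hR.locallyLipschitz_integral s
  have hφs : φ s = 0 := intervalIntegral.integral_same
  have hφt : φ t = 0 := by
    simp only [hφ]
    rw [intervalIntegral.integral_sub (hV.intervalIntegrable s t) intervalIntegrable_const,
      intervalIntegral.integral_const, smul_eq_mul, hc, mul_div_cancel₀ _ (sub_pos.2 hst).ne',
      sub_self]
  have hderiv : ∀ᵐ u, deriv φ u = V u - c :=
    (hR.ae_hasDerivAt_integral s).mono fun u hu => hu.deriv
  have hdφ := LocallyBoundedMeasurable.deriv_of_locallyLipschitz hφlip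
  have hsq : ∫ u in s..t, (V u - c) ^ 2 = 0 :=
    calc ∫ u in s..t, (V u - c) ^ 2 = ∫ u in s..t, (V u * deriv φ u - c * deriv φ u) :=
          intervalIntegral.integral_congr_ae <| by
            filter_upwards [hderiv] with u hu _
            rw [hu]
            ring
      _ = 0 := by
          rw [intervalIntegral.integral_sub
              (((hV.prodMk hdφ).continuous_comp continuous_mul).intervalIntegrable s t)
              ((hdφ.intervalIntegrable s t).const_mul c), h φ hφlip hφs hφt,
            intervalIntegral.integral_const_mul, integral_deriv_eq_sub_of_locallyLipschitz hφlip,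
            hφs, hφt, sub_self, mul_zero, sub_zero]
  rw [intervalIntegral.integral_of_le hst.le, integral_Ioc_eq_integral_Ioo,
    setIntegral_eq_zero_iff_of_nonneg_ae (Eventually.of_forall fun _ => sq_nonneg _)
      ((hR.continuous_comp (continuous_pow 2)).intervalIntegrable s t |>.1.mono_set
        Ioo_subset_Ioc_self)] at hsq
  refine ⟨c, ((ae_restrict_iff' measurableSet_Ioo).1 hsq).mono fun u hu hmem => ?_⟩
  exact sub_eq_zero.1 (pow_eq_zero_iff two_ne_zero |>.1 (hu hmem))

lemma exists_ae_eq_add_integral_of_integral_mul_deriv_add_mul_eq_zero (hst : s < t)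
    (hV : LocallyBoundedMeasurable V) (hZ : LocallyBoundedMeasurable Z)
    (h : ∀ φ, LocallyLipschitz φ → φ s = 0 → φ t = 0 →
      ∫ u in s..t, (V u * deriv φ u + Z u * φ u) = 0) :
    ∃ c, ∀ᵐ u, u ∈ Ioo s t → V u = c + ∫ v in s..u, Z v := by
  set H : ℝ → ℝ := fun u => ∫ v in s..u, Z v
  have hHlip : LocallyLipschitz H := hZ.locallyLipschitz_integral s
  have hHm := LocallyBoundedMeasurable.of_continuous hHlip.continuous
  obtain ⟨c, hc⟩ := exists_ae_eq_const_of_integral_mul_deriv_eq_zero (V := fun u => V u - H u) hst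
    ((hV.prodMk hHm).continuous_comp continuous_sub) fun φ hφ hφs hφt => by
      have hdφ := LocallyBoundedMeasurable.deriv_of_locallyLipschitz hφ
      have hφm := LocallyBoundedMeasurable.of_continuous hφ.continuous
      have hmul {f g : ℝ → ℝ} (hf : LocallyBoundedMeasurable f) (hg : LocallyBoundedMeasurable g) :=
        ((hf.prodMk hg).continuous_comp continuous_mul).intervalIntegrable s t
      have hacc {f : ℝ → ℝ} (hf : LocallyLipschitz f) :=
        absolutelyContinuousOnInterval_of_locallyLipschitz hf s t
      have hparts := (hacc hHlip).integral_mul_deriv_eq_deriv_mul (hacc hφ)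
      have hderiv : ∫ u in s..t, deriv H u * φ u = ∫ u in s..t, Z u * φ u :=
        intervalIntegral.integral_congr_ae <| by
          filter_upwards [hZ.ae_hasDerivAt_integral s] with u hu _
          rw [hu.deriv]
      have htest := h φ hφ hφs hφt
      rw [intervalIntegral.integral_add (hmul hV hdφ) (hmul hZ hφm)] at htest
      rw [hderiv, hφs, hφt] at hparts
      simp only [sub_mul]
      rw [intervalIntegral.integral_sub (hmul hV hdφ) (hmul hHm hdφ), hparts]
      linarith
  exact ⟨c, hc.mono fun u hu hmem => by linarith [hu hmem]⟩

end DuBoisReymond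

section Momentum

/-- The right-hand side of the Euler–Lagrange equation `(2 W(γ) γ')' = |γ'|² ∇W(γ) + μ (γ')^⊥` of
the energy `∫ W(γ) |γ'|²` with area multiplier `μ`, as a function of position and velocity. -/
def force (W : ℝ × ℝ → ℝ) (μ : ℝ) (z : (ℝ × ℝ) × ℝ × ℝ) : ℝ × ℝ :=
  enorm2 z.2 ^ 2 • grad2 W z.1 + μ • perp z.2

/-- Criticality of `γ` on `[s, t]` for `energy W` under a signed area constraint, with Lagrange
multiplier `μ`. -/
def IsCritical (W : ℝ × ℝ → ℝ) (μ s t : ℝ) (γ : ℝ → ℝ × ℝ) : Prop :=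
  ∀ η, IsTestField s t η → energyVar W s t γ η = μ * areaVar s t γ η

variable {W : ℝ × ℝ → ℝ} {γ : ℝ → ℝ × ℝ} {μ s t : ℝ}

lemma continuous_grad2 (hW : ContDiff ℝ 1 W) : Continuous (grad2 W) := by
  unfold grad2
  fun_prop

lemma continuous_force (hW : ContDiff ℝ 1 W) (μ : ℝ) : Continuous (force W μ) := by
  have hgrad := continuous_grad2 hW
  unfold force perp
  fun_prop

lemma energyVar_sub_mul_areaVar (hW : ContDiff ℝ 1 W) (hγ : LocallyLipschitz γ)
    {η : ℝ → ℝ × ℝ} (hη : LocallyLipschitz η) :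
    energyVar W s t γ η - μ * areaVar s t γ η
      = ∫ u in s..t, (2 * W (γ u) * ((deriv γ u).1 * (deriv η u).1
          + (deriv γ u).2 * (deriv η u).2)
        + ((force W μ (γ u, deriv γ u)).1 * (η u).1
          + (force W μ (γ u, deriv γ u)).2 * (η u).2)) := by
  have hWc := hW.continuous
  rw [energyVar, areaVar, ← intervalIntegral.integral_const_mul, ← intervalIntegral.integral_sub
    (intervalIntegrable_comp_jets (g := fun z => 2 * W z.1.1 * (z.1.2.1 * z.2.2.1
      + z.1.2.2 * z.2.2.2) + enorm2 z.1.2 ^ 2 * fderiv ℝ W z.1.1 z.2.1) (by fun_prop) hγ hη s t)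
    (intervalIntegrable_comp_jets (g := fun z => μ * (z.2.1.1 * z.1.2.2 - z.1.2.1 * z.2.1.2))
      (by fun_prop) hγ hη s t)]
  refine intervalIntegral.integral_congr fun u _ => ?_
  have hgrad : fderiv ℝ W (γ u) (η u)
      = (grad2 W (γ u)).1 * (η u).1 + (grad2 W (γ u)).2 * (η u).2 := by
    have hbasis : η u = (η u).1 • ((1 : ℝ), (0 : ℝ)) + (η u).2 • ((0 : ℝ), (1 : ℝ)) := by
      ext <;> simp
    conv_lhs => rw [hbasis]
    simp only [map_add, map_smul, grad2, smul_eq_mul]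
    ring
  simp only [hgrad, force, perp, Prod.fst_add, Prod.snd_add, Prod.smul_fst, Prod.smul_snd,
    smul_eq_mul]
  ring

lemma integral_force (hW : ContDiff ℝ 1 W) (hγ : LocallyLipschitz γ) (u : ℝ) :
    ∫ v in s..u, force W μ (γ v, deriv γ v)
      = (∫ v in s..u, (force W μ (γ v, deriv γ v)).1,
        ∫ v in s..u, (force W μ (γ v, deriv γ v)).2) := by
  have hintegrable := ((locallyBoundedMeasurable_jet hγ).continuous_comp
    (continuous_force hW μ)).intervalIntegrable s u
  exact Prod.ext ((ContinuousLinearMap.fst ℝ ℝ ℝ).intervalIntegral_comp_comm hintegrable).symm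
    ((ContinuousLinearMap.snd ℝ ℝ ℝ).intervalIntegral_comp_comm hintegrable).symm

lemma IsCritical.exists_ae_momentum_eq_add_integral_force (h : IsCritical W μ s t γ)
    (hW : ContDiff ℝ 1 W) (hγ : LocallyLipschitz γ) (hst : s < t) :
    ∃ c : ℝ × ℝ, ∀ᵐ u, u ∈ Ioo s t →
      (2 * W (γ u)) • deriv γ u = c + ∫ v in s..u, force W μ (γ v, deriv γ v) := by
  have hWc := hW.continuous
  have hjet := locallyBoundedMeasurable_jet hγ
  have hforce := hjet.continuous_comp (continuous_force hW μ)
  have hweak {η : ℝ → ℝ × ℝ} (hη : IsTestField s t η) :=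
    (energyVar_sub_mul_areaVar hW hγ hη.locallyLipschitz).symm.trans (sub_eq_zero.2 (h η hη))
  obtain ⟨c₁, hc₁⟩ := exists_ae_eq_add_integral_of_integral_mul_deriv_add_mul_eq_zero hst
    (hjet.continuous_comp (g := fun z => 2 * W z.1 * z.2.1) (by fun_prop))
    (hforce.continuous_comp continuous_fst) fun φ hφ hφs hφt => by
      rw [← hweak (isTestField_fst hφ hφs hφt)]
      refine intervalIntegral.integral_congr_ae ?_
      filter_upwards [ae_differentiableAt_of_locallyLipschitz hφ] with u hu _
      have hderiv : deriv (fun v => (φ v, (0 : ℝ))) u = (deriv φ u, 0) :=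
        (hu.hasDerivAt.prodMk (hasDerivAt_const u 0)).deriv
      rw [hderiv]
      ring
  obtain ⟨c₂, hc₂⟩ := exists_ae_eq_add_integral_of_integral_mul_deriv_add_mul_eq_zero hst
    (hjet.continuous_comp (g := fun z => 2 * W z.1 * z.2.2) (by fun_prop))
    (hforce.continuous_comp continuous_snd) fun φ hφ hφs hφt => by
      rw [← hweak (isTestField_snd hφ hφs hφt)]
      refine intervalIntegral.integral_congr_ae ?_
      filter_upwards [ae_differentiableAt_of_locallyLipschitz hφ] with u hu _
      have hderiv : deriv (fun v => ((0 : ℝ), φ v)) u = (0, deriv φ u) :=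
        ((hasDerivAt_const u 0).prodMk hu.hasDerivAt).deriv
      rw [hderiv]
      ring
  refine ⟨(c₁, c₂), ?_⟩
  filter_upwards [hc₁, hc₂] with u hu₁ hu₂ hmem
  rw [integral_force hW hγ]
  exact Prod.ext (hu₁ hmem) (hu₂ hmem)

end Momentum

section Multiplier

lemma ae_eq_zero_of_integral_mul_eq_zero {V : ℝ → ℝ} {s t : ℝ} (hst : s < t)
    (hV : LocallyBoundedMeasurable V)
    (h : ∀ φ, LocallyLipschitz φ → φ s = 0 → φ t = 0 → ∫ u in s..t, φ u * V u = 0) :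
    ∀ᵐ u, u ∈ Ioo s t → V u = 0 := by
  refine isOpen_Ioo.ae_eq_zero_of_integral_contDiff_smul_eq_zero
    (hV.locallyIntegrable.locallyIntegrableOn _) fun φ hφ _ hsupp => ?_
  have hzero {u : ℝ} (hu : u ∉ Ioo s t) : φ u = 0 :=
    image_eq_zero_of_notMem_tsupport fun hmem => hu (hsupp hmem)
  rw [← h φ (hφ.of_le (mod_cast le_top)).locallyLipschitz (hzero left_notMem_Ioo)
      (hzero right_notMem_Ioo), intervalIntegral.integral_of_le hst.le,
    integral_Ioc_eq_integral_Ioo]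
  refine (setIntegral_eq_integral_of_forall_compl_eq_zero fun u hu => ?_).symm
  rw [hzero hu, zero_smul]

variable {W F : ℝ × ℝ → ℝ} {Γ : ℝ → ℝ × ℝ × ℝ} {γ γ₁ γ₂ η η₁ η₂ : ℝ → ℝ × ℝ}
  {l μ s t s₁ t₁ s₂ t₂ x y : ℝ}

lemma IsHorizontalArc.liftJoins_add_smul (h : IsHorizontalArc F Γ s t γ)
    (hη : IsTestField s t η) (x : ℝ) :
    LiftJoins s t (fun u => γ u + x • η u) (Γ s) (Γ t + (0, 0, x * areaVar s t γ η)) where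
  le := h.lt.le
  locallyLipschitz := locallyLipschitz_add_smul h.locallyLipschitz hη.locallyLipschitz x
  left := by simp [hη.left, h.eqOn (left_mem_Icc.2 h.lt.le), projCurve]
  right := by simp [hη.right, h.eqOn (right_mem_Icc.2 h.lt.le), projCurve]
  sArea_eq := by
    rw [hη.sArea_add_smul h.locallyLipschitz, h.sArea_eq s t le_rfl h.lt.le le_rfl]
    simp only [Prod.snd_add]
    ring

lemma IsHorizontalArc.liftJoins (h : IsHorizontalArc F Γ s t γ) :
    LiftJoins s t γ (Γ s) (Γ t) where
  le := h.lt.le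
  locallyLipschitz := h.locallyLipschitz
  left := h.eqOn (left_mem_Icc.2 h.lt.le)
  right := h.eqOn (right_mem_Icc.2 h.lt.le)
  sArea_eq := h.sArea_eq s t le_rfl h.lt.le le_rfl

lemma IsHorizontalArc.exists_areaVar_ne_zero (h : IsHorizontalArc F Γ s t γ)
    (hΓ : HasConstantSpeed F Γ l) (hF : ∀ p, 0 ≤ F p) (hl : 0 < l) :
    ∃ η, IsTestField s t η ∧ areaVar s t γ η ≠ 0 := by
  by_contra! hzero
  have hderiv := LocallyBoundedMeasurable.deriv_of_locallyLipschitz h.locallyLipschitz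
  have hfst := ae_eq_zero_of_integral_mul_eq_zero h.lt (hderiv.continuous_comp continuous_fst)
    fun φ hφ hs ht => by simpa [areaVar, mul_comm] using hzero _ (isTestField_snd hφ hs ht)
  have hsnd := ae_eq_zero_of_integral_mul_eq_zero h.lt (hderiv.continuous_comp continuous_snd)
    fun φ hφ hs ht => by simpa [areaVar] using hzero _ (isTestField_fst hφ hs ht)
  have hlen : degLen F s t γ = ∫ _ in s..t, (0 : ℝ) := by
    refine intervalIntegral_congr_ae_Ioo h.lt.le ?_
    filter_upwards [hfst, hsnd] with u hu₁ hu₂ hmem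
    rw [Prod.ext (hu₁ hmem) (hu₂ hmem) (y := 0), enorm2_zero, mul_zero]
  have hdist := h.liftJoins.dCC_le_degLen hF
  rw [hΓ s t h.nonneg h.lt.le h.le_one, hlen, intervalIntegral.integral_zero] at hdist
  exact hdist.not_gt (mul_pos (sub_pos.2 h.lt) hl)

lemma IsHorizontalArc.dCC_add_areaVar_le (h : IsHorizontalArc F Γ s t γ)
    (hη : IsTestField s t η) (hWF : ∀ p, W p = F p ^ 2) (hF : ∀ p, 0 ≤ F p) (hFc : Continuous F)
    (hl : 0 < l) (x : ℝ) :
    dCC F (Γ s) (Γ t + (0, 0, x * areaVar s t γ η))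
      ≤ ((energy W s t fun u => γ u + x • η u) / l + l * (t - s)) / 2 :=
  ((h.liftJoins_add_smul hη x).dCC_le_degLen hF).trans <| degLen_le_energy hWF hFc
    (locallyLipschitz_add_smul h.locallyLipschitz hη.locallyLipschitz x) h.lt.le hl

-- The two area changes cancel, so lifting the part of `Γ` between the two arcs vertically by the
-- first one produces a competitor for `Γ`.
lemma IsHorizontalArc.le_energy_add_energy (h₁ : IsHorizontalArc F Γ s₁ t₁ γ₁)
    (h₂ : IsHorizontalArc F Γ s₂ t₂ γ₂) (hle : t₁ ≤ s₂) (hη₁ : IsTestField s₁ t₁ η₁)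
    (hη₂ : IsTestField s₂ t₂ η₂) (hΓ : HasConstantSpeed F Γ l) (hWF : ∀ p, W p = F p ^ 2)
    (hF : ∀ p, 0 ≤ F p) (hFc : Continuous F) (hl : 0 < l)
    (hxy : x * areaVar s₁ t₁ γ₁ η₁ + y * areaVar s₂ t₂ γ₂ η₂ = 0) :
    l ^ 2 * (t₁ - s₁) + l ^ 2 * (t₂ - s₂)
      ≤ (energy W s₁ t₁ fun u => γ₁ u + x • η₁ u) + energy W s₂ t₂ fun u => γ₂ u + y • η₂ u := by
  set v : ℝ := x * areaVar s₁ t₁ γ₁ η₁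
  have harc₁ := h₁.dCC_add_areaVar_le hη₁ hWF hF hFc hl x
  have harc₂ := h₂.dCC_add_areaVar_le hη₂ hWF hF hFc hl y
  have hlift : Γ t₂ + (0, 0, y * areaVar s₂ t₂ γ₂ η₂) + (0, 0, v) = Γ t₂ := by
    ext <;> simp [add_assoc, add_comm _ v, hxy]
  rw [← dCC_add_vertical F _ _ v, hlift] at harc₂
  have hmiddle := dCC_add_vertical F (Γ t₁) (Γ s₂) v
  have htri₁ := dCC_triangle hF hFc (Γ 0) (Γ s₁) (Γ 1)
  have htri₂ := dCC_triangle hF hFc (Γ s₁) (Γ t₁ + (0, 0, v)) (Γ 1)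
  have htri₃ := dCC_triangle hF hFc (Γ t₁ + (0, 0, v)) (Γ s₂ + (0, 0, v)) (Γ 1)
  have htri₄ := dCC_triangle hF hFc (Γ s₂ + (0, 0, v)) (Γ t₂) (Γ 1)
  rw [hΓ 0 1 le_rfl zero_le_one le_rfl,
    hΓ 0 s₁ le_rfl h₁.nonneg (h₁.lt.le.trans h₁.le_one)] at htri₁
  rw [hΓ t₁ s₂ (h₁.nonneg.trans h₁.lt.le) hle (h₂.lt.le.trans h₂.le_one)] at hmiddle
  rw [hΓ t₂ 1 (h₂.nonneg.trans h₂.lt.le) h₂.le_one le_rfl] at htri₄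
  generalize (energy W s₁ t₁ fun u => γ₁ u + x • η₁ u) = E₁ at *
  generalize (energy W s₂ t₂ fun u => γ₂ u + y • η₂ u) = E₂ at *
  have hsum : l * (t₁ - s₁ + (t₂ - s₂)) ≤ (E₁ + E₂) / l := by
    rw [add_div]
    linarith
  rw [le_div_iff₀ hl] at hsum
  linarith

lemma IsHorizontalArc.energyVar_mul_areaVar_comm (h₁ : IsHorizontalArc F Γ s₁ t₁ γ₁)
    (h₂ : IsHorizontalArc F Γ s₂ t₂ γ₂) (hle : t₁ ≤ s₂) (hη₁ : IsTestField s₁ t₁ η₁)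
    (hη₂ : IsTestField s₂ t₂ η₂) (hΓ : HasConstantSpeed F Γ l) (hW : ContDiff ℝ 1 W)
    (hWF : ∀ p, W p = F p ^ 2) (hF : ∀ p, 0 ≤ F p) (hFc : Continuous F) (hl : 0 < l) :
    energyVar W s₁ t₁ γ₁ η₁ * areaVar s₂ t₂ γ₂ η₂
      = energyVar W s₂ t₂ γ₂ η₂ * areaVar s₁ t₁ γ₁ η₁ := by
  set A₁ := areaVar s₁ t₁ γ₁ η₁
  set A₂ := areaVar s₂ t₂ γ₂ η₂
  have hscaled {s t : ℝ} {γ η : ℝ → ℝ × ℝ} (h : IsHorizontalArc F Γ s t γ)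
      (hη : IsTestField s t η) (A : ℝ) :
      HasDerivAt (fun x : ℝ => energy W s t fun u => γ u + (x * A) • η u)
        (energyVar W s t γ η * A) 0 := by
    have hbase := hasDerivAt_energy_add_smul hW h.locallyLipschitz hη.locallyLipschitz s t
    rw [← zero_mul A] at hbase
    exact hbase.comp (0 : ℝ) (hasDerivAt_mul_const A)
  have hmin : IsLocalMin (fun x : ℝ => (energy W s₁ t₁ fun u => γ₁ u + (x * A₂) • η₁ u)
      + energy W s₂ t₂ fun u => γ₂ u + (x * -A₁) • η₂ u) 0 := by
    refine Eventually.of_forall fun x => ?_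
    refine le_trans ?_ (h₁.le_energy_add_energy h₂ hle hη₁ hη₂ hΓ hWF hF hFc hl (by ring))
    simp only [zero_mul, zero_smul, add_zero]
    exact add_le_add
      (energy_le_of_speed_le hWF hF hFc h₁.locallyLipschitz h₁.lt.le (h₁.speed_le hΓ hF hFc))
      (energy_le_of_speed_le hWF hF hFc h₂.locallyLipschitz h₂.lt.le (h₂.speed_le hΓ hF hFc))
  linarith [hmin.hasDerivAt_eq_zero ((hscaled h₁ hη₁ A₂).add (hscaled h₂ hη₂ (-A₁)))]

lemma IsCritical.of_disjoint (hcrit : IsCritical W μ s₁ t₁ γ₁)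
    (h₁ : IsHorizontalArc F Γ s₁ t₁ γ₁) (h₂ : IsHorizontalArc F Γ s₂ t₂ γ₂)
    (hdisj : t₁ ≤ s₂ ∨ t₂ ≤ s₁) (hΓ : HasConstantSpeed F Γ l) (hW : ContDiff ℝ 1 W)
    (hWF : ∀ p, W p = F p ^ 2) (hF : ∀ p, 0 ≤ F p) (hFc : Continuous F) (hl : 0 < l) :
    IsCritical W μ s₂ t₂ γ₂ := by
  intro η₂ hη₂
  obtain ⟨η₁, hη₁, hne⟩ := h₁.exists_areaVar_ne_zero hΓ hF hl
  have hcomm : energyVar W s₁ t₁ γ₁ η₁ * areaVar s₂ t₂ γ₂ η₂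
      = energyVar W s₂ t₂ γ₂ η₂ * areaVar s₁ t₁ γ₁ η₁ := by
    rcases hdisj with hle | hle
    · exact h₁.energyVar_mul_areaVar_comm h₂ hle hη₁ hη₂ hΓ hW hWF hF hFc hl
    · exact (h₂.energyVar_mul_areaVar_comm h₁ hle hη₂ hη₁ hΓ hW hWF hF hFc hl).symm
  rw [hcrit η₁ hη₁] at hcomm
  exact mul_right_cancel₀ hne (by linarith)

lemma IsHorizontalArc.exists_isCritical (h₁ : IsHorizontalArc F Γ s₁ t₁ γ₁)
    (h₂ : IsHorizontalArc F Γ s₂ t₂ γ₂) (hle : t₁ ≤ s₂) (hΓ : HasConstantSpeed F Γ l)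
    (hW : ContDiff ℝ 1 W) (hWF : ∀ p, W p = F p ^ 2) (hF : ∀ p, 0 ≤ F p) (hFc : Continuous F)
    (hl : 0 < l) : ∃ μ, IsCritical W μ s₁ t₁ γ₁ ∧ IsCritical W μ s₂ t₂ γ₂ := by
  obtain ⟨η₁, hη₁, hne⟩ := h₁.exists_areaVar_ne_zero hΓ hF hl
  have hcrit : IsCritical W (energyVar W s₁ t₁ γ₁ η₁ / areaVar s₁ t₁ γ₁ η₁) s₂ t₂ γ₂ := by
    intro η₂ hη₂
    have hcomm := h₁.energyVar_mul_areaVar_comm h₂ hle hη₁ hη₂ hΓ hW hWF hF hFc hl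
    field_simp
    linarith
  exact ⟨_, hcrit.of_disjoint h₂ h₁ (.inr hle) hΓ hW hWF hF hFc hl, hcrit⟩

-- Every point has a small arc avoiding one of two fixed disjoint reference arcs.
lemma HasConstantSpeed.exists_multiplier (hΓ : HasConstantSpeed F Γ l) (hW : ContDiff ℝ 1 W)
    (hWF : ∀ p, W p = F p ^ 2) (hF : ∀ p, 0 ≤ F p) (hFc : Continuous F) (hl : 0 < l) :
    ∃ μ, ∀ t₀ ∈ Ioo (0 : ℝ) 1, 0 < F (projCurve Γ t₀) → ∃ δ > 0, ∃ γ,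
      IsHorizontalArc F Γ (t₀ - δ) (t₀ + δ) γ ∧ IsCritical W μ (t₀ - δ) (t₀ + δ) γ := by
  by_cases hexists : ∃ τ ∈ Ioo (0 : ℝ) 1, 0 < F (projCurve Γ τ)
  swap
  · exact ⟨0, fun t₀ ht₀ hpos => absurd ⟨t₀, ht₀, hpos⟩ hexists⟩
  obtain ⟨τ, hτ, hτpos⟩ := hexists
  obtain ⟨d, hd, γ₀, h₀⟩ := hΓ.exists_isHorizontalArc hF hFc hτ hτpos
  have hleft : IsHorizontalArc F Γ (τ - d) (τ - d / 2) γ₀ :=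
    h₀.mono le_rfl (by linarith) (by linarith)
  have hright : IsHorizontalArc F Γ (τ + d / 2) (τ + d) γ₀ :=
    h₀.mono (by linarith) (by linarith) le_rfl
  obtain ⟨μ, hcleft, hcright⟩ :=
    hleft.exists_isCritical hright (by linarith) hΓ hW hWF hF hFc hl
  refine ⟨μ, fun t₀ ht₀ hpos => ?_⟩
  obtain ⟨δ, hδ, γ, h⟩ := hΓ.exists_isHorizontalArc hF hFc ht₀ hpos
  have hρ : 0 < min δ (d / 2) := lt_min hδ (half_pos hd)
  have hρδ : min δ (d / 2) ≤ δ := min_le_left ..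
  have hρd : min δ (d / 2) ≤ d / 2 := min_le_right ..
  have hsmall := h.mono (s' := t₀ - min δ (d / 2)) (t' := t₀ + min δ (d / 2)) (by linarith)
    (by linarith) (by linarith)
  refine ⟨_, hρ, γ, hsmall, ?_⟩
  rcases le_total t₀ τ with hle | hle
  · exact hcright.of_disjoint hright hsmall (.inr (by linarith)) hΓ hW hWF hF hFc hl
  · exact hcleft.of_disjoint hleft hsmall (.inl (by linarith)) hΓ hW hWF hF hFc hl

end Multiplier

section Regularity

lemma hasDerivAt_integral_of_ae_eq {E : Type*} [NormedAddCommGroup E] [NormedSpace ℝ E]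
    [CompleteSpace E] {f g : ℝ → E} {s t u : ℝ} (a : ℝ)
    (hf : ∀ b c, IntervalIntegrable f volume b c) (hg : ContinuousOn g (Ioo s t))
    (hfg : ∀ᵐ v, v ∈ Ioo s t → f v = g v) (hu : u ∈ Ioo s t) :
    HasDerivAt (fun v => ∫ w in a..v, f w) (g u) u := by
  have hlocal : (fun v => ∫ w in a..v, f w)
      =ᶠ[𝓝 u] fun v => (∫ w in a..u, f w) + ∫ w in u..v, g w := by
    filter_upwards [Ioo_mem_nhds hu.1 hu.2] with v hv
    rw [← intervalIntegral.integral_add_adjacent_intervals (hf a u) (hf u v)]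
    congr 1
    refine intervalIntegral.integral_congr_ae ?_
    filter_upwards [hfg] with w hw hmem
    exact hw (ordConnected_Ioo.uIcc_subset hu hv (uIoc_subset_uIcc hmem))
  have hprim : HasDerivAt (fun v => ∫ w in u..v, g w) (g u) u :=
    intervalIntegral.integral_hasDerivAt_right .refl
      (hg.stronglyMeasurableAtFilter isOpen_Ioo u hu)
      (hg.continuousAt (Ioo_mem_nhds hu.1 hu.2))
  exact (hprim.const_add _).congr_of_eventuallyEq hlocal

lemma hasDerivAt_of_ae_deriv_eq {γ g : ℝ → ℝ × ℝ} {s t u : ℝ} (hγ : LocallyLipschitz γ)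
    (hg : ContinuousOn g (Ioo s t)) (h : ∀ᵐ v, v ∈ Ioo s t → deriv γ v = g v)
    (hu : u ∈ Ioo s t) : HasDerivAt γ (g u) u := by
  have hderiv := LocallyBoundedMeasurable.deriv_of_locallyLipschitz hγ
  have hprimitive (v : ℝ) : γ v = γ s + ∫ w in s..v, deriv γ w := by
    have hintegrable := hderiv.intervalIntegrable s v
    have hfst := (ContinuousLinearMap.fst ℝ ℝ ℝ).intervalIntegral_comp_comm hintegrable
    have hsnd := (ContinuousLinearMap.snd ℝ ℝ ℝ).intervalIntegral_comp_comm hintegrable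
    ext
    · exact (eq_add_of_sub_eq' (integral_deriv_fst hγ s v).symm).trans (congrArg _ hfst)
    · exact (eq_add_of_sub_eq' (integral_deriv_snd hγ s v).symm).trans (congrArg _ hsnd)
  rw [funext hprimitive]
  exact (hasDerivAt_integral_of_ae_eq s hderiv.intervalIntegrable hg h hu).const_add _

/-- Classical solutions on `(s, t)` of the Euler–Lagrange equation of `energy W` with area
multiplier `μ`, in terms of the momentum `2 W(γ) γ'`. -/
structure IsELSolution (W : ℝ × ℝ → ℝ) (μ s t : ℝ) (γ : ℝ → ℝ × ℝ) : Prop where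
  differentiableAt : ∀ u ∈ Ioo s t, DifferentiableAt ℝ γ u
  hasDerivAt_momentum : ∀ u ∈ Ioo s t,
    HasDerivAt (fun v => (2 * W (γ v)) • deriv γ v) (force W μ (γ u, deriv γ u)) u

variable {W F : ℝ × ℝ → ℝ} {Γ : ℝ → ℝ × ℝ × ℝ} {γ : ℝ → ℝ × ℝ} {l μ s t u : ℝ}

lemma IsCritical.isELSolution (h : IsCritical W μ s t γ) (hW : ContDiff ℝ 1 W)
    (hγ : LocallyLipschitz γ) (hst : s < t) (hpos : ∀ u ∈ Ioo s t, W (γ u) ≠ 0) :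
    IsELSolution W μ s t γ := by
  obtain ⟨c, hc⟩ := h.exists_ae_momentum_eq_add_integral_force hW hγ hst
  set q : ℝ → ℝ × ℝ := fun u => c + ∫ v in s..u, force W μ (γ v, deriv γ v)
  have hne (u : ℝ) (hu : u ∈ Ioo s t) : 2 * W (γ u) ≠ 0 := mul_ne_zero two_ne_zero (hpos u hu)
  have hforce := (locallyBoundedMeasurable_jet hγ).continuous_comp (continuous_force hW μ)
  have hqc : Continuous q :=
    continuous_const.add (hforce.locallyLipschitz_integral s).continuous
  have hWγ : Continuous fun u => W (γ u) := hW.continuous.comp hγ.continuous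
  have hvel : ContinuousOn (fun u => (2 * W (γ u))⁻¹ • q u) (Ioo s t) :=
    ((continuous_const.mul hWγ).continuousOn.inv₀ hne).smul hqc.continuousOn
  have hderiv (u : ℝ) (hu : u ∈ Ioo s t) : HasDerivAt γ ((2 * W (γ u))⁻¹ • q u) u := by
    refine hasDerivAt_of_ae_deriv_eq hγ hvel ?_ hu
    filter_upwards [hc] with v hv hmem
    rw [eq_inv_smul_iff₀ (hne v hmem)]
    exact hv hmem
  have hmomentum {u : ℝ} (hu : u ∈ Ioo s t) : (2 * W (γ u)) • deriv γ u = q u := by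
    rw [(hderiv u hu).deriv, smul_inv_smul₀ (hne u hu)]
  refine ⟨fun u hu => (hderiv u hu).differentiableAt, fun u hu => ?_⟩
  have hcont : ContinuousOn (fun v => force W μ (γ v, deriv γ v)) (Ioo s t) :=
    (continuous_force hW μ).comp_continuousOn (hγ.continuous.continuousOn.prodMk
      (hvel.congr fun v hv => (hderiv v hv).deriv))
  refine ((hasDerivAt_integral_of_ae_eq s hforce.intervalIntegrable hcont
    (Eventually.of_forall fun _ _ => rfl) hu).const_add c).congr_of_eventuallyEq ?_
  filter_upwards [Ioo_mem_nhds hu.1 hu.2] with v hv using hmomentum hv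

lemma IsHorizontalArc.isELSolution_of_speed_eq_zero (h : IsHorizontalArc F Γ s t γ)
    (hΓ : HasConstantSpeed F Γ 0) (hF : ∀ p, 0 ≤ F p) (hFc : Continuous F) (W : ℝ × ℝ → ℝ)
    (μ : ℝ) : IsELSolution W μ s t γ := by
  have hderiv (u : ℝ) (hu : u ∈ Ioo s t) : HasDerivAt γ 0 u := by
    refine hasDerivAt_of_ae_deriv_eq (g := 0) h.locallyLipschitz continuousOn_const ?_ hu
    filter_upwards [h.speed_le hΓ hF hFc] with v hv hmem
    have hnorm : enorm2 (deriv γ v) ≤ 0 :=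
      nonpos_of_mul_nonpos_right (hv hmem) (h.pos v (Ioo_subset_Icc_self hmem))
    exact norm_le_zero_iff.1 ((norm_le_enorm2 _).trans hnorm)
  refine ⟨fun u hu => (hderiv u hu).differentiableAt, fun u hu => ?_⟩
  have hforce : force W μ (γ u, deriv γ u) = 0 := by
    simp [force, perp, (hderiv u hu).deriv, enorm2_zero]
  rw [hforce]
  refine (hasDerivAt_const u 0).congr_of_eventuallyEq ?_
  filter_upwards [Ioo_mem_nhds hu.1 hu.2] with v hv
  rw [(hderiv v hv).deriv, smul_zero]

lemma contDiff_force {n : ℕ} (hW : ContDiff ℝ (n + 1 : ℕ) W) (μ : ℝ) :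
    ContDiff ℝ n (force W μ) := by
  have hpartial (v : ℝ × ℝ) : ContDiff ℝ n fun z : (ℝ × ℝ) × ℝ × ℝ => fderiv ℝ W z.1 v :=
    ((hW.fderiv_right (by norm_cast)).comp contDiff_fst).clm_apply contDiff_const
  have hgrad : ContDiff ℝ n fun z : (ℝ × ℝ) × ℝ × ℝ => grad2 W z.1 :=
    (hpartial (1, 0)).prodMk (hpartial (0, 1))
  unfold force perp
  simp only [enorm2_sq]
  fun_prop

lemma contDiffOn_succ_of_hasDerivAt {E : Type*} [NormedAddCommGroup E] [NormedSpace ℝ E]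
    {f f' : ℝ → E} {S : Set ℝ} (hS : IsOpen S) {n : ℕ} (h : ∀ u ∈ S, HasDerivAt f (f' u) u)
    (hf' : ContDiffOn ℝ n f' S) : ContDiffOn ℝ (n + 1 : ℕ) f S := by
  push_cast
  rw [contDiffOn_succ_iff_deriv_of_isOpen hS]
  exact ⟨fun u hu => (h u hu).differentiableAt.differentiableWithinAt, by simp,
    hf'.congr fun u hu => (h u hu).deriv⟩

lemma IsELSolution.continuousOn_deriv (h : IsELSolution W μ s t γ) (hW : Continuous W)
    (hpos : ∀ u ∈ Ioo s t, W (γ u) ≠ 0) : ContinuousOn (deriv γ) (Ioo s t) := by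
  have hne (u : ℝ) (hu : u ∈ Ioo s t) : 2 * W (γ u) ≠ 0 := mul_ne_zero two_ne_zero (hpos u hu)
  have hγ : ContinuousOn γ (Ioo s t) := fun u hu =>
    (h.differentiableAt u hu).continuousAt.continuousWithinAt
  have hmomentum : ContinuousOn (fun u => (2 * W (γ u)) • deriv γ u) (Ioo s t) := fun u hu =>
    (h.hasDerivAt_momentum u hu).continuousAt.continuousWithinAt
  exact (((continuousOn_const.mul (hW.comp_continuousOn hγ)).inv₀ hne).smul hmomentum).congr
    fun u hu => (inv_smul_smul₀ (hne u hu) _).symm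

-- Bootstrap: `γ'` is recovered from the momentum, whose derivative is a function of `(γ, γ')`.
lemma IsELSolution.contDiffOn_jet (h : IsELSolution W μ s t γ) (hW : ContDiff ℝ (⊤ : ℕ∞) W)
    (hpos : ∀ u ∈ Ioo s t, W (γ u) ≠ 0) (n : ℕ) :
    ContDiffOn ℝ n γ (Ioo s t) ∧ ContDiffOn ℝ n (deriv γ) (Ioo s t) := by
  have hne (u : ℝ) (hu : u ∈ Ioo s t) : 2 * W (γ u) ≠ 0 := mul_ne_zero two_ne_zero (hpos u hu)
  have hWn (m : ℕ) : ContDiff ℝ m W := hW.of_le (mod_cast le_top)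
  induction n with
  | zero =>
    simp only [Nat.cast_zero, contDiffOn_zero]
    exact ⟨fun u hu => (h.differentiableAt u hu).continuousAt.continuousWithinAt,
      h.continuousOn_deriv hW.continuous hpos⟩
  | succ n ih =>
    have hγ : ContDiffOn ℝ (n + 1 : ℕ) γ (Ioo s t) := contDiffOn_succ_of_hasDerivAt isOpen_Ioo
      (fun u hu => (h.differentiableAt u hu).hasDerivAt) ih.2
    have hmomentum : ContDiffOn ℝ (n + 1 : ℕ) (fun u => (2 * W (γ u)) • deriv γ u) (Ioo s t) :=
      contDiffOn_succ_of_hasDerivAt isOpen_Ioo h.hasDerivAt_momentum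
        ((contDiff_force (hWn (n + 1)) μ).comp_contDiffOn (ih.1.prodMk ih.2))
    have hWγ := contDiffOn_const (c := (2 : ℝ)) |>.mul ((hWn (n + 1)).comp_contDiffOn hγ)
    exact ⟨hγ, ((hWγ.inv hne).smul hmomentum).congr fun u hu =>
      (inv_smul_smul₀ (hne u hu) _).symm⟩

lemma IsHorizontalArc.hasDerivAt_snd_snd (h : IsHorizontalArc F Γ s t γ)
    (hγ' : ContinuousOn (deriv γ) (Ioo s t)) (hu : u ∈ Ioo s t) :
    HasDerivAt (fun v => (Γ v).2.2) ((γ u).1 * (deriv γ u).2) u := by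
  have hγ := h.locallyLipschitz
  have hprim := hasDerivAt_integral_of_ae_eq (f := fun v => (γ v).1 * (deriv γ v).2) s
    (intervalIntegrable_comp_jet (g := fun z => z.1.1 * z.2.2) (by fun_prop) hγ)
    ((continuous_fst.comp hγ.continuous).continuousOn.mul
      (continuous_snd.comp_continuousOn hγ')) (Eventually.of_forall fun _ _ => rfl) hu
  refine (hprim.const_add (Γ s).2.2).congr_of_eventuallyEq ?_
  filter_upwards [Ioo_mem_nhds hu.1 hu.2] with v hv
  rw [← sArea_eq_integral hγ, h.sArea_eq s v le_rfl hv.1.le hv.2.le, add_sub_cancel]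

lemma IsHorizontalArc.contDiffOn (h : IsHorizontalArc F Γ s t γ)
    (hEL : IsELSolution W μ s t γ) (hW : ContDiff ℝ (⊤ : ℕ∞) W)
    (hpos : ∀ u ∈ Ioo s t, W (γ u) ≠ 0) : ContDiffOn ℝ (⊤ : ℕ∞) Γ (Ioo s t) := by
  refine contDiffOn_infty.2 fun n => ?_
  obtain ⟨hγ, hγ'⟩ := hEL.contDiffOn_jet hW hpos n
  have hproj : ContDiffOn ℝ n (projCurve Γ) (Ioo s t) :=
    hγ.congr fun u hu => (h.eqOn (Ioo_subset_Icc_self hu)).symm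
  have hthird : ContDiffOn ℝ n (fun v => (Γ v).2.2) (Ioo s t) :=
    (contDiffOn_succ_of_hasDerivAt isOpen_Ioo
      (fun u hu => h.hasDerivAt_snd_snd (hEL.continuousOn_deriv hW.continuous hpos) hu)
      (hγ.fst.mul hγ'.snd)).of_le (mod_cast n.le_succ)
  exact hproj.fst.prodMk (hproj.snd.prodMk hthird)

lemma IsHorizontalArc.speed_eq (h : IsHorizontalArc F Γ s t γ) (hΓ : HasConstantSpeed F Γ l)
    (hF : ∀ p, 0 ≤ F p) (hFc : Continuous F) (hγ' : ContinuousOn (deriv γ) (Ioo s t)) :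
    ∀ u ∈ Ioo s t, F (γ u) * enorm2 (deriv γ u) = l := by
  have hγ := h.locallyLipschitz
  have hle : (fun u => F (γ u) * enorm2 (deriv γ u)) ≤ᵐ[volume.restrict (Ioo s t)] fun _ => l :=
    (ae_restrict_iff' measurableSet_Ioo).2 (h.speed_le hΓ hF hFc)
  have hintegrable : IntegrableOn (fun u => F (γ u) * enorm2 (deriv γ u)) (Ioo s t) :=
    (intervalIntegrable_degLen hFc hγ s t).1.mono_set Ioo_subset_Ioc_self
  have hconst : IntegrableOn (fun _ => l) (Ioo s t) := integrableOn_const (by simp)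
  have htotal : ∫ u in Ioo s t, F (γ u) * enorm2 (deriv γ u) = ∫ _ in Ioo s t, l := by
    refine le_antisymm (integral_mono_ae hintegrable hconst hle) ?_
    have hdist := h.liftJoins.dCC_le_degLen hF
    rw [hΓ s t h.nonneg h.lt.le h.le_one, degLen, intervalIntegral.integral_of_le h.lt.le,
      integral_Ioc_eq_integral_Ioo] at hdist
    simpa [h.lt.le] using hdist
  have hae := (integral_eq_iff_of_ae_le hintegrable hconst hle).1 htotal
  exact Measure.eqOn_open_of_ae_eq hae isOpen_Ioo
    ((hFc.comp hγ.continuous).continuousOn.mul (continuous_enorm2.comp_continuousOn hγ'))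
    continuousOn_const

end Regularity

section EulerLagrange

variable {F : ℝ × ℝ → ℝ} {Γ : ℝ → ℝ × ℝ × ℝ} {γ γ' : ℝ → ℝ × ℝ} {l lam μ s t u : ℝ}

lemma grad2_sq {p : ℝ × ℝ} (hF : DifferentiableAt ℝ F p) :
    grad2 (fun p => F p ^ 2) p = (2 * F p) • grad2 F p := by
  have hsq := (hF.hasFDerivAt.pow 2).fderiv
  simp [grad2, hsq]

lemma ELeq.congr_of_eventuallyEq (h : ELeq F lam γ t) (hγ : γ' =ᶠ[𝓝 t] γ) : ELeq F lam γ' t := by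
  have hmomentum : (fun s => (F (γ' s) / enorm2 (deriv γ' s)) • deriv γ' s)
      =ᶠ[𝓝 t] fun s => (F (γ s) / enorm2 (deriv γ s)) • deriv γ s := by
    filter_upwards [hγ, hγ.deriv] with s hs hs'
    rw [hs, hs']
  rwa [ELeq, hmomentum.deriv_eq, hγ.deriv_eq, hγ.eq_of_nhds]

lemma elEq_of_eventually_deriv_eq_zero (F : ℝ × ℝ → ℝ) (lam : ℝ)
    (h : ∀ᶠ u in 𝓝 t, deriv γ u = 0) : ELeq F lam γ t := by
  have hmomentum : (fun s => (F (γ s) / enorm2 (deriv γ s)) • deriv γ s) =ᶠ[𝓝 t] fun _ => 0 := by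
    filter_upwards [h] with s hs
    rw [hs, smul_zero]
  simp [ELeq, hmomentum.deriv_eq, h.self_of_nhds, enorm2_zero, perp, Prod.mk_zero_zero]

lemma differentiableAt_of_sq {p : ℝ × ℝ} (hF : ∀ p, 0 ≤ F p)
    (hsq : DifferentiableAt ℝ (fun p => F p ^ 2) p) (hp : F p ≠ 0) : DifferentiableAt ℝ F p := by
  have hsqrt := hsq.sqrt (pow_ne_zero 2 hp)
  simpa only [Real.sqrt_sq (hF _)] using hsqrt

-- At speed `F(γ)|γ'| = l` the unit-speed momentum `F(γ)γ'/|γ'|` is `(2l)⁻¹` times `2F(γ)²γ'`.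
lemma IsELSolution.elEq_of_speed_pos (h : IsELSolution (fun p => F p ^ 2) μ s t γ)
    (hspeed : ∀ v ∈ Ioo s t, F (γ v) * enorm2 (deriv γ v) = l) (hl : 0 < l) (hu : u ∈ Ioo s t)
    (hF : DifferentiableAt ℝ F (γ u)) : ELeq F (μ / (2 * l)) γ u := by
  have hmomentum : (fun v => (F (γ v) / enorm2 (deriv γ v)) • deriv γ v)
      =ᶠ[𝓝 u] fun v => (2 * l)⁻¹ • ((2 * F (γ v) ^ 2) • deriv γ v) := by
    filter_upwards [Ioo_mem_nhds hu.1 hu.2] with v hv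
    have hne : enorm2 (deriv γ v) ≠ 0 := by
      intro hzero
      simp [← hspeed v hv, hzero] at hl
    rw [smul_smul]
    congr 1
    rw [← hspeed v hv] at hl ⊢
    have hFne := left_ne_zero_of_mul hl.ne'
    field_simp
  have hderiv : HasDerivAt (fun v => (2 * l)⁻¹ • ((2 * F (γ v) ^ 2) • deriv γ v))
      ((2 * l)⁻¹ • force (fun p => F p ^ 2) μ (γ u, deriv γ u)) u :=
    (h.hasDerivAt_momentum u hu).fun_const_smul (2 * l)⁻¹
  rw [ELeq, hmomentum.deriv_eq, hderiv.deriv, force, grad2_sq hF, smul_add, smul_smul, smul_smul,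
    smul_smul]
  have hcoef : (2 * l)⁻¹ * enorm2 (deriv γ u) ^ 2 * (2 * F (γ u)) = enorm2 (deriv γ u) := by
    rw [mul_assoc, inv_mul_eq_iff_eq_mul₀ (by positivity), ← hspeed u hu]
    ring
  dsimp only
  rw [hcoef, div_eq_inv_mul]
  abel

lemma IsELSolution.elEq (h : IsELSolution (fun p => F p ^ 2) μ s t γ)
    (hspeed : ∀ v ∈ Ioo s t, F (γ v) * enorm2 (deriv γ v) = l) (hl : 0 ≤ l)
    (hpos : ∀ v ∈ Ioo s t, F (γ v) ≠ 0) (hu : u ∈ Ioo s t)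
    (hF : DifferentiableAt ℝ F (γ u)) : ELeq F (μ / (2 * l)) γ u := by
  rcases hl.eq_or_lt with rfl | hl
  · refine elEq_of_eventually_deriv_eq_zero F _ ?_
    filter_upwards [Ioo_mem_nhds hu.1 hu.2] with v hv
    have hnorm := (mul_eq_zero.1 (hspeed v hv)).resolve_left (hpos v hv)
    exact norm_le_zero_iff.1 ((norm_le_enorm2 _).trans_eq hnorm)
  · exact h.elEq_of_speed_pos hspeed hl hu hF

lemma HasConstantSpeed.exists_isELSolution (hΓ : HasConstantSpeed F Γ l)
    (hFsq : ContDiff ℝ 1 fun p => F p ^ 2) (hF : ∀ p, 0 ≤ F p) (hFc : Continuous F) :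
    ∃ μ, ∀ t₀ ∈ Ioo (0 : ℝ) 1, 0 < F (projCurve Γ t₀) → ∃ δ > 0, ∃ γ,
      IsHorizontalArc F Γ (t₀ - δ) (t₀ + δ) γ ∧
        IsELSolution (fun p => F p ^ 2) μ (t₀ - δ) (t₀ + δ) γ := by
  rcases (hΓ.nonneg hF).eq_or_lt with rfl | hl
  · refine ⟨0, fun t₀ ht₀ hpos => ?_⟩
    obtain ⟨δ, hδ, γ, h⟩ := hΓ.exists_isHorizontalArc hF hFc ht₀ hpos
    exact ⟨δ, hδ, γ, h, h.isELSolution_of_speed_eq_zero hΓ hF hFc _ 0⟩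
  · obtain ⟨μ, hμ⟩ := hΓ.exists_multiplier hFsq (fun _ => rfl) hF hFc hl
    refine ⟨μ, fun t₀ ht₀ hpos => ?_⟩
    obtain ⟨δ, hδ, γ, h, hcrit⟩ := hμ t₀ ht₀ hpos
    exact ⟨δ, hδ, γ, h, hcrit.isELSolution hFsq h.locallyLipschitz h.lt fun u hu =>
      pow_ne_zero 2 (h.pos u (Ioo_subset_Icc_self hu)).ne'⟩

lemma IsHorizontalArc.regularity (h : IsHorizontalArc F Γ s t γ)
    (hEL : IsELSolution (fun p => F p ^ 2) μ s t γ) (hΓ : HasConstantSpeed F Γ l)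
    (hFsq : ContDiff ℝ (⊤ : ℕ∞) fun p => F p ^ 2) (hF : ∀ p, 0 ≤ F p) (hFc : Continuous F)
    (hu : u ∈ Ioo s t) :
    ContDiffAt ℝ (⊤ : ℕ∞) Γ u ∧
      deriv (fun s => (Γ s).2.2) u = (Γ u).1 * deriv (fun s => (Γ s).2.1) u ∧
      ELeq F (μ / (2 * l)) (projCurve Γ) u := by
  have hFne (v : ℝ) (hv : v ∈ Ioo s t) : F (γ v) ≠ 0 := (h.pos v (Ioo_subset_Icc_self hv)).ne'
  have hsqne (v : ℝ) (hv : v ∈ Ioo s t) : F (γ v) ^ 2 ≠ 0 := pow_ne_zero 2 (hFne v hv)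
  have hderiv := hEL.continuousOn_deriv hFsq.continuous hsqne
  have heq : projCurve Γ =ᶠ[𝓝 u] γ := by
    filter_upwards [Ioo_mem_nhds hu.1 hu.2] with v hv using (h.eqOn (Ioo_subset_Icc_self hv)).symm
  have hproj : HasDerivAt (projCurve Γ) (deriv γ u) u :=
    (hEL.differentiableAt u hu).hasDerivAt.congr_of_eventuallyEq heq
  refine ⟨(h.contDiffOn hEL hFsq hsqne).contDiffAt (Ioo_mem_nhds hu.1 hu.2), ?_, ?_⟩
  · rw [(h.hasDerivAt_snd_snd hderiv hu).deriv, ← heq.eq_of_nhds]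
    exact congrArg _ (hasFDerivAt_snd.comp_hasDerivAt u hproj).deriv.symm
  · have hFd := differentiableAt_of_sq hF (hFsq.differentiable (by simp) _) (hFne u hu)
    exact (hEL.elEq (h.speed_eq hΓ hF hFc hderiv) (hΓ.nonneg hF) hFne hu hFd).congr_of_eventuallyEq
      heq

end EulerLagrange

theorem geodesic_euler_lagrange_general {F : ℝ × ℝ → ℝ} (hF : ∀ p, 0 ≤ F p)
    (hFsq : ContDiff ℝ (⊤ : ℕ∞) fun p => F p ^ 2) {P Q : ℝ × ℝ × ℝ} {Γ : ℝ → ℝ × ℝ × ℝ}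
    (hΓ : IsMinGeodesic F P Q Γ) :
    ∃ lam : ℝ, ∀ t ∈ Ioo (0 : ℝ) 1, F (projCurve Γ t) ≠ 0 →
      ContDiffAt ℝ (⊤ : ℕ∞) Γ t ∧
      deriv (fun s => (Γ s).2.2) t = (Γ t).1 * deriv (fun s => (Γ s).2.1) t ∧
      ELeq F lam (projCurve Γ) t := by
  have hFc : Continuous F := by simpa only [Real.sqrt_sq (hF _)] using hFsq.continuous.sqrt
  have hspeed := hΓ.hasConstantSpeed hF hFc
  obtain ⟨μ, hμ⟩ := hspeed.exists_isELSolution (hFsq.of_le (mod_cast le_top)) hF hFc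
  refine ⟨μ / (2 * dCC F P Q), fun t ht hne => ?_⟩
  obtain ⟨δ, hδ, γ, harc, hEL⟩ := hμ t ht ((hF _).lt_of_ne' hne)
  exact harc.regularity hEL hspeed hFsq hF hFc ⟨by linarith, by linarith⟩

/-- on any parameter interval where its projection avoids the wells, a minimizing
geodesic is smooth and admissible, and its projection satisfies the Euler–Lagrange system
`−(F(γ)γ'/|γ'|)' + |γ'|∇F(γ) = −λ(γ')^⊥` for some constant `λ`; if the geodesic contains no
vertical segment over the wells, the system holds with one and the same `λ` on every such arc. -/
theorem geodesic_euler_lagrange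
    (W : ℝ × ℝ → ℝ) (pm pp : ℝ × ℝ) (hW : TwoWell W pm pp)
    (F : ℝ × ℝ → ℝ) (hF : F = fun p => Real.sqrt (W p))
    (P Q : ℝ × ℝ × ℝ) (Γ : ℝ → ℝ × ℝ × ℝ) (hΓ : IsMinGeodesic F P Q Γ)
    (a b : ℝ) (h0a : 0 ≤ a) (hab : a < b) (hb1 : b ≤ 1)
    (havoid : ∀ t ∈ Set.Ioo a b, projCurve Γ t ≠ pm ∧ projCurve Γ t ≠ pp) :
    (ContDiffOn ℝ (⊤ : ℕ∞) Γ (Set.Ioo a b) ∧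
     (∀ t ∈ Set.Ioo a b,
        deriv (fun s => (Γ s).2.2) t = (Γ t).1 * deriv (fun s => (Γ s).2.1) t) ∧
     (∃ lam : ℝ, ∀ t ∈ Set.Ioo a b, ELeq F lam (projCurve Γ) t)) ∧
    ((¬ ∃ s t : ℝ, s < t ∧
        Set.Icc s t ⊆ { u | u ∈ Set.Icc (0:ℝ) 1 ∧ (projCurve Γ u = pm ∨ projCurve Γ u = pp) }) →
      ∃ lam : ℝ, ∀ a' b' : ℝ, 0 ≤ a' → b' ≤ 1 →
        (∀ t ∈ Set.Ioo a' b', projCurve Γ t ≠ pm ∧ projCurve Γ t ≠ pp) →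
        ∀ t ∈ Set.Ioo a' b', ELeq F lam (projCurve Γ) t) := by
  subst hF
  have hsq : (fun p => √(W p) ^ 2) = W := funext fun p => Real.sq_sqrt (hW.nonneg p)
  have hne {p : ℝ × ℝ} (hp : p ≠ pm ∧ p ≠ pp) : √(W p) ≠ 0 := by
    rw [Real.sqrt_ne_zero (hW.nonneg p), Ne, hW.zeroSet]
    exact not_or.2 hp
  obtain ⟨lam, hlam⟩ := geodesic_euler_lagrange_general (fun p => Real.sqrt_nonneg (W p))
    (by rw [hsq]; exact hW.smooth) hΓ
  have hmem {a b t : ℝ} (ha : 0 ≤ a) (hb : b ≤ 1) (ht : t ∈ Ioo a b) : t ∈ Ioo (0 : ℝ) 1 :=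
    Ioo_subset_Ioo ha hb ht
  have hreg (t : ℝ) (ht : t ∈ Ioo a b) := hlam t (hmem h0a hb1 ht) (hne (havoid t ht))
  exact ⟨⟨fun t ht => (hreg t ht).1.contDiffWithinAt, fun t ht => (hreg t ht).2.1,
    lam, fun t ht => (hreg t ht).2.2⟩, fun _ => ⟨lam, fun _ _ ha hb havoid' t ht =>
      (hlam t (hmem ha hb ht) (hne (havoid' t ht))).2.2⟩⟩
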